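/- arXiv:1611.10315 — 5 statements merged into one kernel-verified Lean document; each statement's English description precedes it below -/
import Mathlib

section
/- For every integer k ≥ 1 there is a constant D = D(k) such that the following holds for every bipartite graph H with bipartition (S,T), |S| = |T| = k, every δ ∈ (0,1/2) and every integer P ≥ 1: there is n₀ = n₀(k,δ,P) such that for every graph G on n ≥ n₀ vertices and every equipartition P of V(G) into p ≤ P parts, either G contains at least δ^D·n^{2k} induced bipartite copies of H, or G admits a δ-homogeneous equipartition Q which refines P and whose number of parts q satisfies δ^{-1} ≤ q ≤ p·δ^{-D}. -/
open scoped Classical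
open Finset

noncomputable section

/-- Number of unordered vertex pairs on which two graphs on the same vertex set differ. -/
def editDist {n : ℕ} (G H : SimpleGraph (Fin n)) : ℕ :=
  Set.ncard {e : Sym2 (Fin n) | (e ∈ G.edgeSet ∧ e ∉ H.edgeSet) ∨ (e ∉ G.edgeSet ∧ e ∈ H.edgeSet)}

/-- `G` is `ε`-far from satisfying the graph property `P`. -/
def Far (P : ∀ n : ℕ, Set (SimpleGraph (Fin n))) {n : ℕ} (G : SimpleGraph (Fin n)) (ε : ℝ) : Prop :=
  ∀ H : SimpleGraph (Fin n), H ∈ P n → ε * (n : ℝ) ^ 2 ≤ (editDist G H : ℝ)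

/-- The subgraph induced by a vertex subset `Q` of size `m`, as a graph on `Fin m`. -/
def inducedOn {n : ℕ} (G : SimpleGraph (Fin n)) {m : ℕ} (Q : Finset (Fin n))
    (h : Q.card = m) : SimpleGraph (Fin m) :=
  G.comap fun i => ((Q.orderIsoOfFin h) i : Fin n)

/-- A graph property is easily testable if for some constant `c > 0`, for every `ε ∈ (0,1/2)`
and every graph on at least `ε ^ (-c)` vertices which is `ε`-far from `P`, at least a
`2/3`-fraction of the `⌈ε ^ (-c)⌉`-element vertex subsets induce a subgraph not satisfying `P`. -/
def EasilyTestable (P : ∀ n : ℕ, Set (SimpleGraph (Fin n))) : Prop :=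
  ∃ c : ℝ, 0 < c ∧ ∀ ε : ℝ, 0 < ε → ε < 1 / 2 → ∀ n : ℕ, ∀ G : SimpleGraph (Fin n),
    ε ^ (-c) ≤ (n : ℝ) → Far P G ε →
    (2 / 3 : ℝ) * (((Finset.univ : Finset (Fin n)).powersetCard ⌈ε ^ (-c)⌉₊).card : ℝ) ≤
      ((((Finset.univ : Finset (Fin n)).powersetCard ⌈ε ^ (-c)⌉₊).filter
        fun Q => ∃ h : Q.card = ⌈ε ^ (-c)⌉₊, inducedOn G Q h ∉ P ⌈ε ^ (-c)⌉₊).card : ℝ)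

/-- The property of being induced `𝓕`-free. -/
def InducedFree (𝓕 : Set (Σ k : ℕ, SimpleGraph (Fin k))) : ∀ n : ℕ, Set (SimpleGraph (Fin n)) :=
  fun n => {G | ∀ p ∈ 𝓕, IsEmpty (p.2 ↪g G)}

/-- A graph is bipartite: its vertex set can be partitioned into two independent sets. -/
def IsBipGraph {V : Type*} (H : SimpleGraph V) : Prop :=
  ∃ A : Set V, (∀ u ∈ A, ∀ v ∈ A, ¬ H.Adj u v) ∧ (∀ u ∉ A, ∀ v ∉ A, ¬ H.Adj u v)

/-- A graph is co-bipartite: its vertex set can be partitioned into two cliques. -/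
def IsCoBipGraph {V : Type*} (H : SimpleGraph V) : Prop :=
  ∃ A : Set V, (∀ u ∈ A, ∀ v ∈ A, u ≠ v → H.Adj u v) ∧ (∀ u ∉ A, ∀ v ∉ A, u ≠ v → H.Adj u v)

/-- A graph is split: its vertex set can be partitioned into a clique and an independent set. -/
def IsSplitGraph {V : Type*} (H : SimpleGraph V) : Prop :=
  ∃ A : Set V, (∀ u ∈ A, ∀ v ∈ A, u ≠ v → H.Adj u v) ∧ (∀ u ∉ A, ∀ v ∉ A, ¬ H.Adj u v)

/-- The number of induced bipartite copies in `G` of the bipartite graph with bipartition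
`(Fin k, Fin k)` and edge relation `B`: injections `φ` of the two sides into `V(G)` such that
for all `s ∈ S`, `t ∈ T` we have `B s t ↔ φ s ∼ φ t` (no condition inside the sides). -/
def bipCopyCount {k n : ℕ} (B : Fin k → Fin k → Prop) (G : SimpleGraph (Fin n)) : ℕ :=
  Set.ncard {φ : (Fin k ⊕ Fin k) ↪ Fin n |
    ∀ s t : Fin k, B s t ↔ G.Adj (φ (Sum.inl s)) (φ (Sum.inr t))}

/-- The edge density `d(X,Y)` between two (disjoint) vertex sets, as a real number. -/
def dens {n : ℕ} (G : SimpleGraph (Fin n)) (X Y : Finset (Fin n)) : ℝ :=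
  (G.edgeDensity X Y : ℝ)

/-- The pair `(X,Y)` is `δ`-homogeneous: `d(X,Y) ≥ 1 - δ` or `d(X,Y) ≤ δ`. -/
def HomPair {n : ℕ} (G : SimpleGraph (Fin n)) (δ : ℝ) (X Y : Finset (Fin n)) : Prop :=
  1 - δ ≤ dens G X Y ∨ dens G X Y ≤ δ

/-- The dominant value of the pair `(X,Y)` is `1` (it is `0` otherwise). -/
def DomOne {n : ℕ} (G : SimpleGraph (Fin n)) (X Y : Finset (Fin n)) : Prop :=
  1 / 2 ≤ dens G X Y

/-- `Q` is an equipartition: the parts are disjoint, cover everything, and their sizes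
differ by at most one. -/
def IsEquipartition {n q : ℕ} (Q : Fin q → Finset (Fin n)) : Prop :=
  (∀ i j : Fin q, i ≠ j → Disjoint (Q i) (Q j)) ∧ (∀ v : Fin n, ∃ i, v ∈ Q i) ∧
  (∀ i j : Fin q, (Q i).card ≤ (Q j).card + 1)

/-- An equipartition `Q` is `δ`-homogeneous: the total weight `|Qᵢ||Qⱼ|/n²` of the
non-`δ`-homogeneous pairs `i < j` is at most `δ`. -/
def HomogeneousPartition {n q : ℕ} (G : SimpleGraph (Fin n)) (δ : ℝ)
    (Q : Fin q → Finset (Fin n)) : Prop :=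
  ∑ i : Fin q, ∑ j : Fin q,
      (if i < j ∧ ¬ HomPair G δ (Q i) (Q j) then ((Q i).card : ℝ) * ((Q j).card : ℝ) else 0)
    ≤ δ * (n : ℝ) ^ 2

lemma bad_count {n : ℕ} (far : Fin n → Fin n → Prop) (irr : ∀ v, ¬ far v v)
    (sym : ∀ u v, far u v → far v u)
    (ε : ℝ) (h1 : ε ≤ 1) (M : ℕ)
    (h : ∀ U : Finset (Fin n), U.card ≤ M →
      ε * n ≤ (((univ : Finset (Fin n)).filter fun v => ∀ u ∈ U, far u v).card : ℝ)) :
    ∀ (N m : ℕ) (U : Finset (Fin n)), U.card + m ≤ M →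
      (((univ : Finset (Fin N → Fin n)).filter fun f => ¬ ∃ W : Finset (Fin n), W.card = m ∧
        (∀ w ∈ W, ∃ i, f i = w) ∧ (∀ w ∈ W, ∀ u ∈ U, far u w) ∧
        (∀ w ∈ W, ∀ w' ∈ W, w ≠ w' → far w w')).card : ℝ) ≤
      (n : ℝ) ^ N * 2 ^ m * (1 - ε / 2) ^ N := by
  intro N
  induction N with
  | zero =>
    intro m U hU
    have : ((univ : Finset (Fin 0 → Fin n)).filter fun f => ¬ ∃ W : Finset (Fin n), W.card = m ∧
        (∀ w ∈ W, ∃ i, f i = w) ∧ (∀ w ∈ W, ∀ u ∈ U, far u w) ∧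
        (∀ w ∈ W, ∀ w' ∈ W, w ≠ w' → far w w')).card ≤ 1 :=
      (Finset.card_filter_le _ _).trans (by simp)
    have h2 : (1 : ℝ) ≤ 2 ^ m := one_le_pow₀ (by norm_num)
    simp only [pow_zero, one_mul, mul_one]
    exact le_trans (by exact_mod_cast this) h2
  | succ N ih =>
    intro m U hU
    have hy : 0 ≤ 1 - ε / 2 := by linarith
    cases m with
    | zero =>
      rw [Finset.filter_false_of_mem]
      · simp; positivity
      · intro f _
        simp only [not_not]
        exact ⟨∅, by simp⟩
    | succ m =>
      set bad : (N : ℕ) → ℕ → Finset (Fin n) → Finset (Fin N → Fin n) := fun N m U =>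
        (univ : Finset (Fin N → Fin n)).filter fun f => ¬ ∃ W : Finset (Fin n), W.card = m ∧
        (∀ w ∈ W, ∃ i, f i = w) ∧ (∀ w ∈ W, ∀ u ∈ U, far u w) ∧
        (∀ w ∈ W, ∀ w' ∈ W, w ≠ w' → far w w') with hbad
      change ((bad (N+1) (m+1) U).card : ℝ) ≤ _
      have ih' : ∀ (m : ℕ) (U : Finset (Fin n)), #U + m ≤ M →
        ((bad N m U).card : ℝ) ≤ (n : ℝ) ^ N * 2 ^ m * (1 - ε / 2) ^ N := ih
      clear ih
      have key : (bad (N+1) (m+1) U).card ≤ ∑ v : Fin n,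
          (if ∀ u ∈ U, far u v then bad N m (insert v U) else bad N (m+1) U).card := by
        rw [← Finset.card_sigma]
        apply Finset.card_le_card_of_injOn (fun f => ⟨f 0, fun i => f i.succ⟩)
        · intro f hf
          simp only [hbad, coe_filter, Set.mem_ofPred_eq, mem_univ, true_and] at hf
          simp only [coe_sigma, Set.mem_sigma_iff, mem_coe, mem_univ, true_and]
          split_ifs with hfar
          · simp only [hbad, mem_filter, mem_univ, true_and]
            rintro ⟨W, hW1, hW2, hW3, hW4⟩
            apply hf
            have hnot : f 0 ∉ W := fun hm => irr _ (hW3 _ hm _ (mem_insert_self _ _))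
            refine ⟨insert (f 0) W, by rw [card_insert_of_notMem hnot, hW1], ?_, ?_, ?_⟩
            · intro w hw
              rcases mem_insert.1 hw with rfl | hw
              · exact ⟨0, rfl⟩
              · obtain ⟨i, hi⟩ := hW2 w hw
                exact ⟨i.succ, hi⟩
            · intro w hw u hu
              rcases mem_insert.1 hw with rfl | hw
              · exact hfar u hu
              · exact hW3 w hw u (mem_insert_of_mem hu)
            · intro w hw w' hw' hne
              rcases mem_insert.1 hw with rfl | hw <;> rcases mem_insert.1 hw' with rfl | hw'
              · exact absurd rfl hne
              · exact hW3 _ hw' _ (mem_insert_self _ _)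
              · exact sym _ _ (hW3 _ hw _ (mem_insert_self _ _))
              · exact hW4 _ hw _ hw' hne
          · simp only [hbad, mem_filter, mem_univ, true_and]
            rintro ⟨W, hW1, hW2, hW3, hW4⟩
            exact hf ⟨W, hW1, fun w hw => let ⟨i, hi⟩ := hW2 w hw; ⟨i.succ, hi⟩, hW3, hW4⟩
        · intro f _ f' _ hff
          simp only [Sigma.mk.injEq, heq_eq_eq] at hff
          funext i
          refine Fin.cases hff.1 (fun i => congrFun hff.2 i) i
      set Y : ℝ := (n : ℝ) ^ N * 2 ^ m * (1 - ε / 2) ^ N with hY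
      have hY0 : 0 ≤ Y := by positivity
      have h3 : ((bad (N+1) (m+1) U).card : ℝ) ≤ ∑ v : Fin n,
          (2 * Y - if ∀ u ∈ U, far u v then Y else 0) := by
        refine (Nat.cast_le.2 key).trans ?_
        push_cast
        apply Finset.sum_le_sum
        intro v _
        split_ifs with hfar
        · have := ih' m (insert v U) (by have := card_insert_le v U; omega)
          linarith
        · have := ih' (m+1) U (by omega)
          rw [pow_succ 2 m] at this
          rw [hY]; linarith
      rw [Finset.sum_sub_distrib, ← Finset.sum_filter] at h3
      simp only [sum_const, card_univ, Fintype.card_fin, nsmul_eq_mul] at h3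
      have h4 := mul_le_mul_of_nonneg_right (h U (by omega)) hY0
      have : (n : ℝ) ^ (N + 1) * 2 ^ (m + 1) * (1 - ε / 2) ^ (N + 1) = n * (2 * Y) - ε * n * Y := by
        rw [hY]; ring
      rw [this]; linarith

def dst {n : ℕ} (G : SimpleGraph (Fin n)) (u v : Fin n) : ℕ :=
  ((univ : Finset (Fin n)).filter fun x => ¬ (G.Adj u x ↔ G.Adj v x)).card

lemma sep_count {n : ℕ} (G : SimpleGraph (Fin n)) (ε : ℝ) (h1' : ε ≤ 1) (N : ℕ)
    (W : Finset (Fin n)) (hW : ∀ w ∈ W, ∀ w' ∈ W, w ≠ w' → ε * n ≤ dst G w w') :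
    (((univ : Finset (Fin N → Fin n)).filter fun g => ¬ ∀ w ∈ W, ∀ w' ∈ W, w ≠ w' →
      ∃ i, ¬ (G.Adj w (g i) ↔ G.Adj w' (g i))).card : ℝ) ≤
    (W.card : ℝ) ^ 2 * ((1 - ε) ^ N * (n : ℝ) ^ N) := by
  have hsub : ((univ : Finset (Fin N → Fin n)).filter fun g => ¬ ∀ w ∈ W, ∀ w' ∈ W, w ≠ w' →
      ∃ i, ¬ (G.Adj w (g i) ↔ G.Adj w' (g i))) ⊆ (W.offDiag).biUnion fun x =>
      Fintype.piFinset (fun _ : Fin N =>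
        (univ : Finset (Fin n)).filter fun y => (G.Adj x.1 y ↔ G.Adj x.2 y)) := by
    intro g hg
    simp only [mem_filter, mem_univ, true_and] at hg
    push Not at hg
    obtain ⟨w, hw, w', hw', hne, hi⟩ := hg
    simp only [mem_biUnion, Fintype.mem_piFinset, mem_filter, mem_univ, true_and]
    refine ⟨(w, w'), mem_offDiag.2 ⟨hw, hw', hne⟩, fun i => ?_⟩
    have := hi i
    tauto
  have h1 : ∀ x ∈ W.offDiag, ((Fintype.piFinset (fun _ : Fin N =>
        (univ : Finset (Fin n)).filter fun y => (G.Adj x.1 y ↔ G.Adj x.2 y))).card : ℝ) ≤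
        (1 - ε) ^ N * (n : ℝ) ^ N := by
    intro x hx
    obtain ⟨ha, hb, hc⟩ := mem_offDiag.1 hx
    rw [Fintype.card_piFinset, prod_const, card_univ, Fintype.card_fin]
    push_cast
    rw [← mul_pow]
    apply pow_le_pow_left₀ (by positivity)
    have h2 := Finset.card_filter_add_card_filter_not (s := (univ : Finset (Fin n)))
      (fun y => (G.Adj x.1 y ↔ G.Adj x.2 y))
    have h3 := hW _ ha _ hb hc
    unfold dst at h3
    rw [card_univ, Fintype.card_fin] at h2
    have h4 : (((univ : Finset (Fin n)).filter fun y => (G.Adj x.1 y ↔ G.Adj x.2 y)).card : ℝ) +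
      ((univ : Finset (Fin n)).filter fun y => ¬ (G.Adj x.1 y ↔ G.Adj x.2 y)).card = n := by
      exact_mod_cast h2
    linarith
  calc _ ≤ (((W.offDiag).biUnion fun x =>
      Fintype.piFinset (fun _ : Fin N =>
        (univ : Finset (Fin n)).filter fun y => (G.Adj x.1 y ↔ G.Adj x.2 y))).card : ℝ) := by
        exact_mod_cast card_le_card hsub
    _ ≤ ∑ x ∈ W.offDiag, ((Fintype.piFinset (fun _ : Fin N =>
        (univ : Finset (Fin n)).filter fun y => (G.Adj x.1 y ↔ G.Adj x.2 y))).card : ℝ) := by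
        exact_mod_cast card_biUnion_le
    _ ≤ ∑ x ∈ W.offDiag, (1 - ε) ^ N * (n : ℝ) ^ N := sum_le_sum h1
    _ ≤ _ := by
      rw [sum_const, nsmul_eq_mul]
      have hnn : 0 ≤ (1 - ε) ^ N * (n : ℝ) ^ N :=
        mul_nonneg (pow_nonneg (by linarith) _) (by positivity)
      apply mul_le_mul_of_nonneg_right _ hnn
      rw [offDiag_card, sq]
      exact_mod_cast Nat.sub_le _ _

lemma shatter_copy {n k N : ℕ} (hk : 1 ≤ k) (G : SimpleGraph (Fin n)) (B : Fin k → Fin k → Prop)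
    (g : Fin N → Fin n)
    (W : Finset (Fin n)) (hW : ∀ w ∈ W, ∀ w' ∈ W, w ≠ w' →
      ∃ i, ¬ (G.Adj w (g i) ↔ G.Adj w' (g i)))
    (hcard : ∑ i ∈ Finset.range (2 * k), N.choose i < W.card) :
    ∃ a : Fin k → Fin n, Function.Injective a ∧ (∀ s, a s ∈ W) ∧
      ∃ b : Fin k → Fin N, Function.Injective b ∧ ∀ s t, B s t ↔ G.Adj (a s) (g (b t)) := by
  set tr : Fin n → Finset (Fin N) := fun w => univ.filter fun i => G.Adj w (g i) with htr
  have hinj : Set.InjOn tr W := by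
    intro w hw w' hw' he
    by_contra hne
    obtain ⟨i, hi⟩ := hW w hw w' hw' hne
    apply hi
    have : i ∈ tr w ↔ i ∈ tr w' := by rw [he]
    simpa [htr] using this
  have hc : (W.image tr).card = W.card := card_image_of_injOn hinj
  have hsh : ∃ S, (W.image tr).Shatters S ∧ 2 * k ≤ S.card := by
    by_contra hcon
    push Not at hcon
    have hv : (W.image tr).vcDim ≤ 2 * k - 1 := by
      apply Finset.sup_le
      intro S hS
      have := hcon S (mem_shatterer.1 hS)
      omega
    have h1 := (card_le_card_shatterer (W.image tr)).trans card_shatterer_le_sum_vcDim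
    have h2 : ∑ i ∈ Iic (W.image tr).vcDim, (Fintype.card (Fin N)).choose i ≤
        ∑ i ∈ Finset.range (2 * k), N.choose i := by
      rw [Fintype.card_fin]
      apply sum_le_sum_of_subset
      intro i hi
      rw [mem_Iic] at hi
      rw [mem_range]; omega
    omega
  obtain ⟨S, hS, hSc⟩ := hsh
  obtain ⟨S', hS', hS'c⟩ := exists_subset_card_eq hSc
  replace hS := hS.mono_right hS'
  have e : Fin k ⊕ Fin k ≃ S' := (Fintype.equivOfCardEq (by simp [hS'c]; omega))
  have hx : ∀ s : Fin k, ∃ w ∈ W, ∀ x : Fin k ⊕ Fin k,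
      (G.Adj w (g (e x)) ↔ (x = Sum.inr s ∨ ∃ t, x = Sum.inl t ∧ B s t)) := by
    intro s
    obtain ⟨u, hu, hu2⟩ := hS (t := (univ.filter fun x : Fin k ⊕ Fin k =>
      (x = Sum.inr s ∨ ∃ t, x = Sum.inl t ∧ B s t)).image (fun x => (e x : Fin N))) (by
        intro y hy
        obtain ⟨x, _, rfl⟩ := mem_image.1 hy
        exact (e x).2)
    obtain ⟨w, hw, rfl⟩ := mem_image.1 hu
    refine ⟨w, hw, fun x => ?_⟩
    have h1 : (e x : Fin N) ∈ S' ∩ tr w ↔ G.Adj w (g (e x)) := by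
      simp [htr]
    rw [← h1, hu2]
    simp only [mem_image, mem_filter, mem_univ, true_and]
    constructor
    · rintro ⟨y, hy, hyx⟩
      rw [← e.injective (Subtype.ext hyx)]; exact hy
    · intro hh; exact ⟨x, hh, rfl⟩
  choose a ha1 ha2 using hx
  refine ⟨a, ?_, ha1, fun t => e (Sum.inl t), ?_, ?_⟩
  · intro s s' hs
    have h1 := (ha2 s (Sum.inr s)).2 (Or.inl rfl)
    rw [hs, ha2] at h1
    simpa using h1
  · intro t t' ht
    have := e.injective (Subtype.ext ht)
    simpa using this
  · intro s t
    rw [ha2]; simp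

lemma fiber_count {n k N : ℕ} (a : Fin k ↪ Fin N) (φ : Fin k → Fin n) :
    ((univ : Finset (Fin N → Fin n)).filter fun f => f ∘ a = φ).card * n ^ k ≤ n ^ N := by
  have h1 : n ^ k = (univ : Finset (Fin k → Fin n)).card := by simp
  have h2 : n ^ N = (univ : Finset (Fin N → Fin n)).card := by simp
  rw [h1, h2, ← card_product]
  apply card_le_card_of_injOn (fun x => Function.extend a x.2 x.1)
  · intro x _; simp
  · rintro ⟨f, ψ⟩ hx ⟨f', ψ'⟩ hx' he
    simp only [coe_product, Set.mem_prod, mem_coe, mem_filter, mem_univ, true_and, and_true] at hx hx'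
    simp only at he
    have e1 : ψ = ψ' := by
      funext i
      have := congrFun he (a i)
      rwa [a.injective.extend_apply, a.injective.extend_apply] at this
    refine Prod.ext ?_ e1
    funext j
    by_cases hj : ∃ i, a i = j
    · obtain ⟨i, rfl⟩ := hj
      have := congrFun (hx.trans hx'.symm) i
      exact this
    · have := congrFun he j
      rwa [Function.extend_apply' _ _ _ hj, Function.extend_apply' _ _ _ hj] at this

lemma many_copies {n k : ℕ} (hk : 1 ≤ k) (hn : 0 < n) (G : SimpleGraph (Fin n))
    (B : Fin k → Fin k → Prop) (ε : ℝ) (h0 : 0 < ε) (h1 : ε ≤ 1) (M N N' : ℕ)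
    (hA : (2 : ℝ) ^ M * (1 - ε / 2) ^ N ≤ 1 / 2) (hB : (M : ℝ) ^ 2 * (1 - ε) ^ N' ≤ 1 / 2)
    (hC : ∑ i ∈ Finset.range (2 * k), N'.choose i < M)
    (h : ∀ U : Finset (Fin n), U.card ≤ M →
      ε * n ≤ (((univ : Finset (Fin n)).filter fun v => ∀ u ∈ U, ε * n ≤ dst G u v).card : ℝ)) :
    n ^ (2 * k) ≤ 4 * (N ^ k * N' ^ k) *
      ((univ : Finset ((Fin k → Fin n) × (Fin k → Fin n))).filter fun x =>
        ∀ s t, B s t ↔ G.Adj (x.1 s) (x.2 t)).card := by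
  set C := ((univ : Finset ((Fin k → Fin n) × (Fin k → Fin n))).filter fun x =>
        ∀ s t, B s t ↔ G.Adj (x.1 s) (x.2 t)) with hCdef
  have hnR : (0 : ℝ) < n := by exact_mod_cast hn
  -- good pairs
  set good : Finset ((Fin N → Fin n) × (Fin N' → Fin n)) :=
    univ.filter fun x => ∃ a : Fin k ↪ Fin N, ∃ b : Fin k ↪ Fin N', (x.1 ∘ a, x.2 ∘ b) ∈ C with hgood
  have hupper : good.card * n ^ (2 * k) ≤ N ^ k * N' ^ k * C.card * n ^ (N + N') := by
    have hsub : good ⊆ (univ : Finset ((Fin k ↪ Fin N) × (Fin k ↪ Fin N'))).biUnion fun ab =>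
        C.biUnion fun x => (univ.filter fun f : Fin N → Fin n => f ∘ ab.1 = x.1) ×ˢ
          (univ.filter fun f : Fin N' → Fin n => f ∘ ab.2 = x.2) := by
      intro x hx
      simp only [hgood, mem_filter, mem_univ, true_and] at hx
      obtain ⟨a, b, hab⟩ := hx
      simp only [mem_biUnion, mem_univ, true_and, mem_product, mem_filter]
      exact ⟨(a, b), _, hab, rfl, rfl⟩
    have hab : ∀ ab : (Fin k ↪ Fin N) × (Fin k ↪ Fin N'), ∀ x : (Fin k → Fin n) × (Fin k → Fin n),
        ((univ.filter fun f : Fin N → Fin n => f ∘ ab.1 = x.1) ×ˢ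
          (univ.filter fun f : Fin N' → Fin n => f ∘ ab.2 = x.2)).card * n ^ (2 * k) ≤ n ^ (N + N') := by
      intro ab x
      rw [card_product, two_mul, pow_add, pow_add]
      calc _ = (((univ.filter fun f : Fin N → Fin n => f ∘ ab.1 = x.1)).card * n ^ k) *
          ((univ.filter fun f : Fin N' → Fin n => f ∘ ab.2 = x.2).card * n ^ k) := by ring
        _ ≤ _ := Nat.mul_le_mul (fiber_count _ _) (fiber_count _ _)
    have hemb : Fintype.card ((Fin k ↪ Fin N) × (Fin k ↪ Fin N')) ≤ N ^ k * N' ^ k := by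
      rw [Fintype.card_prod, Fintype.card_embedding_eq, Fintype.card_embedding_eq]
      simp only [Fintype.card_fin]
      exact Nat.mul_le_mul (Nat.descFactorial_le_pow _ _) (Nat.descFactorial_le_pow _ _)
    calc good.card * n ^ (2 * k) ≤ (∑ ab : (Fin k ↪ Fin N) × (Fin k ↪ Fin N'), ∑ x ∈ C,
          ((univ.filter fun f : Fin N → Fin n => f ∘ ab.1 = x.1) ×ˢ
          (univ.filter fun f : Fin N' → Fin n => f ∘ ab.2 = x.2)).card) * n ^ (2 * k) := by
          apply Nat.mul_le_mul_right
          refine (card_le_card hsub).trans (card_biUnion_le.trans ?_)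
          exact sum_le_sum fun _ _ => card_biUnion_le
      _ = ∑ ab : (Fin k ↪ Fin N) × (Fin k ↪ Fin N'), ∑ x ∈ C,
          ((univ.filter fun f : Fin N → Fin n => f ∘ ab.1 = x.1) ×ˢ
          (univ.filter fun f : Fin N' → Fin n => f ∘ ab.2 = x.2)).card * n ^ (2 * k) := by
          rw [sum_mul]; simp_rw [sum_mul]
      _ ≤ ∑ ab : (Fin k ↪ Fin N) × (Fin k ↪ Fin N'), ∑ x ∈ C, n ^ (N + N') :=
          sum_le_sum fun _ _ => sum_le_sum fun _ _ => hab _ _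
      _ = Fintype.card ((Fin k ↪ Fin N) × (Fin k ↪ Fin N')) * (C.card * n ^ (N + N')) := by
          simp [sum_const]
      _ ≤ N ^ k * N' ^ k * (C.card * n ^ (N + N')) := Nat.mul_le_mul_right _ hemb
      _ = _ := by ring
  -- lower bound
  set gf : Finset (Fin N → Fin n) := univ.filter fun f => ∃ W : Finset (Fin n), W.card = M ∧
        (∀ w ∈ W, ∃ i, f i = w) ∧ (∀ w ∈ W, ∀ u ∈ (∅ : Finset (Fin n)), ε * n ≤ dst G u w) ∧
        (∀ w ∈ W, ∀ w' ∈ W, w ≠ w' → ε * n ≤ dst G w w') with hgf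
  have hgfc : (n : ℝ) ^ N / 2 ≤ gf.card := by
    have h2 := bad_count (fun u v => ε * n ≤ dst G u v) (by
      intro v
      have : dst G v v = 0 := by simp [dst]
      rw [this]; push_cast; simp only [not_le]; positivity) (by
      intro u v huv
      have : dst G v u = dst G u v := by
        unfold dst; congr 1; ext x; simp only [mem_filter, mem_univ, true_and]; tauto
      rw [this]; exact huv) ε h1 M h N M ∅ (by simp)
    have h3 := Finset.card_filter_add_card_filter_not (s := (univ : Finset (Fin N → Fin n)))
      (fun f => ∃ W : Finset (Fin n), W.card = M ∧
        (∀ w ∈ W, ∃ i, f i = w) ∧ (∀ w ∈ W, ∀ u ∈ (∅ : Finset (Fin n)), ε * n ≤ dst G u w) ∧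
        (∀ w ∈ W, ∀ w' ∈ W, w ≠ w' → ε * n ≤ dst G w w'))
    rw [← hgf, card_univ, Fintype.card_fun, Fintype.card_fin, Fintype.card_fin] at h3
    have h4 := congrArg (Nat.cast (R := ℝ)) h3
    rw [Nat.cast_add, Nat.cast_pow] at h4
    have h5 : (n : ℝ) ^ N * 2 ^ M * (1 - ε / 2) ^ N ≤ n ^ N * (1 / 2) := by
      rw [mul_assoc]; exact mul_le_mul_of_nonneg_left hA (by positivity)
    linarith
  have hgood1 : ∀ f ∈ gf, (n : ℝ) ^ N' / 2 ≤
      ((univ : Finset (Fin N' → Fin n)).filter fun g => (f, g) ∈ good).card := by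
    intro f hf
    simp only [hgf, mem_filter, mem_univ, true_and] at hf
    obtain ⟨W, hW1, hW2, -, hW4⟩ := hf
    have h2 := sep_count G ε h1 N' W hW4
    have h3 := Finset.card_filter_add_card_filter_not (s := (univ : Finset (Fin N' → Fin n)))
      (fun g => ∀ w ∈ W, ∀ w' ∈ W, w ≠ w' →
      ∃ i, ¬ (G.Adj w (g i) ↔ G.Adj w' (g i)))
    rw [card_univ, Fintype.card_fun, Fintype.card_fin, Fintype.card_fin] at h3
    have h4 := congrArg (Nat.cast (R := ℝ)) h3
    rw [Nat.cast_add, Nat.cast_pow] at h4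
    have h5 : (W.card : ℝ) ^ 2 * ((1 - ε) ^ N' * (n : ℝ) ^ N') ≤ 1 / 2 * n ^ N' := by
      rw [hW1, ← mul_assoc]; exact mul_le_mul_of_nonneg_right hB (by positivity)
    have h6 : ((univ : Finset (Fin N' → Fin n)).filter fun g => ∀ w ∈ W, ∀ w' ∈ W, w ≠ w' →
      ∃ i, ¬ (G.Adj w (g i) ↔ G.Adj w' (g i))).card ≤
      ((univ : Finset (Fin N' → Fin n)).filter fun g => (f, g) ∈ good).card := by
      apply card_le_card
      intro g hg
      simp only [mem_filter, mem_univ, true_and] at hg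
      obtain ⟨a, ha, haW, b, hb, hab⟩ := shatter_copy hk G B g W hg (by rw [hW1]; exact hC)
      choose a' ha' using fun s => hW2 _ (haW s)
      simp only [hgood, hCdef, mem_filter, mem_univ, true_and]
      refine ⟨⟨a', fun s s' hs => ha ?_⟩, ⟨b, hb⟩, ?_⟩
      · rw [← ha' s, ← ha' s', hs]
      · intro s t
        change B s t ↔ G.Adj (f (a' s)) (g (b t))
        rw [ha']; exact hab s t
    have h7 : (((univ : Finset (Fin N' → Fin n)).filter fun g => ∀ w ∈ W, ∀ w' ∈ W, w ≠ w' →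
      ∃ i, ¬ (G.Adj w (g i) ↔ G.Adj w' (g i))).card : ℝ) ≤
      ((univ : Finset (Fin N' → Fin n)).filter fun g => (f, g) ∈ good).card := by exact_mod_cast h6
    linarith
  have hlower : (n : ℝ) ^ N / 2 * (n ^ N' / 2) ≤ good.card := by
    have h2 : ∑ f ∈ gf, ((univ : Finset (Fin N' → Fin n)).filter fun g => (f, g) ∈ good).card ≤
        good.card := by
      rw [← card_sigma]
      apply card_le_card_of_injOn (fun x => (x.1, x.2))
      · rintro ⟨f, g⟩ hx
        simp only [coe_sigma, Set.mem_sigma_iff, mem_coe, mem_filter, mem_univ, true_and] at hx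
        exact hx.2
      · rintro ⟨f, g⟩ _ ⟨f', g'⟩ _ he
        simp only [Prod.mk.injEq] at he
        obtain ⟨rfl, rfl⟩ := he
        rfl
    have h3 : (gf.card : ℝ) * (n ^ N' / 2) ≤
        ∑ f ∈ gf, (((univ : Finset (Fin N' → Fin n)).filter fun g => (f, g) ∈ good).card : ℝ) := by
      rw [← nsmul_eq_mul, ← sum_const]
      exact sum_le_sum hgood1
    calc _ ≤ (gf.card : ℝ) * (n ^ N' / 2) := mul_le_mul_of_nonneg_right hgfc (by positivity)
      _ ≤ _ := h3
      _ ≤ _ := by exact_mod_cast h2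
  have hup : (good.card : ℝ) * n ^ (2 * k) ≤ N ^ k * N' ^ k * C.card * n ^ (N + N') := by
    exact_mod_cast hupper
  have hfin : (n : ℝ) ^ (2 * k) ≤ 4 * (N ^ k * N' ^ k) * C.card := by
    have h2 := mul_le_mul_of_nonneg_right hlower (by positivity : (0 : ℝ) ≤ (n : ℝ) ^ (2 * k))
    have h3 : (0 : ℝ) < (n : ℝ) ^ (N + N') := by positivity
    refine le_of_mul_le_mul_left ?_ h3
    have h4 : (n : ℝ) ^ N / 2 * (n ^ N' / 2) * n ^ (2 * k) = n ^ (N + N') * n ^ (2 * k) / 4 := by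
      rw [pow_add]; ring
    rw [h4] at h2
    nlinarith
  exact_mod_cast hfin

lemma noninj_count {n : ℕ} {κ : Type} [Fintype κ] [DecidableEq κ] :
    ((univ : Finset (κ → Fin n)).filter fun φ => ¬ Function.Injective φ).card * n ≤
      Fintype.card κ ^ 2 * n ^ Fintype.card κ := by
  have hsub : ((univ : Finset (κ → Fin n)).filter fun φ => ¬ Function.Injective φ) ⊆
      (univ : Finset κ).offDiag.biUnion fun x => univ.filter fun φ => φ x.1 = φ x.2 := by
    intro φ hφ
    obtain ⟨a, b, h1, h2⟩ := Function.not_injective_iff.1 (mem_filter.1 hφ).2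
    simp only [mem_biUnion, mem_filter, mem_univ, true_and]
    exact ⟨(a, b), by simp [h2], h1⟩
  have h1 : ∀ x ∈ (univ : Finset κ).offDiag,
      ((univ : Finset (κ → Fin n)).filter fun φ => φ x.1 = φ x.2).card * n ≤ n ^ Fintype.card κ := by
    rintro ⟨a, b⟩ hx
    have hne : a ≠ b := by simpa using hx
    have h2 : n = (univ : Finset (Fin n)).card := by simp
    have h3 : n ^ Fintype.card κ = (univ : Finset (κ → Fin n)).card := by simp
    suffices hs : (((univ : Finset (κ → Fin n)).filter fun φ => φ a = φ b) ×ˢ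
        (univ : Finset (Fin n))).card ≤ (univ : Finset (κ → Fin n)).card by
      rw [card_product, ← h2, ← h3] at hs; exact hs
    apply card_le_card_of_injOn (fun x => Function.update x.1 a x.2)
    · intro _ _; simp
    · rintro ⟨φ, v⟩ hx ⟨φ', v'⟩ hx' he
      simp only [coe_product, Set.mem_prod, mem_coe, mem_filter, mem_univ, true_and, and_true] at hx hx'
      simp only at he
      have e0 : ∀ y, y ≠ a → φ y = φ' y := by
        intro y hy
        have := congrFun he y
        simpa [Function.update_of_ne hy] using this
      have e1 : v = v' := by simpa using congrFun he a
      refine Prod.ext ?_ e1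
      funext y
      by_cases hy : y = a
      · subst hy
        change φ y = φ' y
        rw [hx, hx', e0 b hne.symm]
      · exact e0 y hy
  calc _ ≤ (∑ x ∈ (univ : Finset κ).offDiag,
      ((univ : Finset (κ → Fin n)).filter fun φ => φ x.1 = φ x.2).card) * n :=
        Nat.mul_le_mul_right _ ((card_le_card hsub).trans card_biUnion_le)
    _ ≤ ∑ x ∈ (univ : Finset κ).offDiag, n ^ Fintype.card κ := by
        rw [sum_mul]; exact sum_le_sum h1
    _ ≤ _ := by
        rw [sum_const, smul_eq_mul, offDiag_card, card_univ, sq]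
        exact Nat.mul_le_mul_right _ (Nat.sub_le _ _)

lemma copies_lower {n k : ℕ} (G : SimpleGraph (Fin n)) (B : Fin k → Fin k → Prop) :
    ((univ : Finset ((Fin k → Fin n) × (Fin k → Fin n))).filter fun x =>
        ∀ s t, B s t ↔ G.Adj (x.1 s) (x.2 t)).card ≤ bipCopyCount B G +
      ((univ : Finset (Fin k ⊕ Fin k → Fin n)).filter fun φ => ¬ Function.Injective φ).card := by
  have h1 : bipCopyCount B G = ((univ : Finset ((Fin k ⊕ Fin k) ↪ Fin n)).filter fun φ =>
      ∀ s t : Fin k, B s t ↔ G.Adj (φ (Sum.inl s)) (φ (Sum.inr t))).card := by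
    unfold bipCopyCount
    rw [← Set.ncard_coe_finset]
    congr 1
    ext φ; simp
  rw [h1, ← card_map ⟨fun φ : (Fin k ⊕ Fin k) ↪ Fin n => (φ : Fin k ⊕ Fin k → Fin n),
    DFunLike.coe_injective⟩]
  refine le_trans ?_ (card_union_le _ _)
  apply card_le_card_of_injOn (fun x => Sum.elim x.1 x.2)
  · intro x hx
    simp only [coe_filter, mem_univ, true_and, Set.mem_ofPred_eq] at hx
    simp only [mem_coe, mem_union, mem_map, mem_filter, mem_univ, true_and,
      Function.Embedding.coeFn_mk]
    by_cases hi : Function.Injective (Sum.elim x.1 x.2)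
    · left
      exact ⟨⟨_, hi⟩, by simpa using hx, rfl⟩
    · right; exact hi
  · rintro ⟨f, g⟩ _ ⟨f', g'⟩ _ he
    have e1 : f = f' := by funext i; simpa using congrFun he (Sum.inl i)
    have e2 : g = g' := by funext i; simpa using congrFun he (Sum.inr i)
    rw [e1, e2]

lemma split_lemma {n ℓ t : ℕ} {κ : Type} [Fintype κ] (c : Fin n → κ) (X : Finset (Fin n))
    (ht : t ≠ 0) (h1 : ℓ * t ≤ X.card) (h2 : X.card ≤ ℓ * (t + 1)) :
    ∃ R : Fin ℓ → Finset (Fin n), (∀ i j, i ≠ j → Disjoint (R i) (R j)) ∧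
      (∀ v ∈ X, ∃ i, v ∈ R i) ∧ (∀ i, R i ⊆ X) ∧ (∀ i, (R i).card = t ∨ (R i).card = t + 1) ∧
      ∑ i, (if ∃ x, ∀ v ∈ R i, c v = x then 0 else (R i).card) ≤ Fintype.card κ * t := by
  set cl : κ → Finset (Fin n) := fun x => X.filter fun v => c v = x with hcl
  let P : Finpartition X := Finpartition.ofExistsUnique ((univ.image cl).erase ∅)
    (by
      intro p hp
      obtain ⟨x, _, rfl⟩ := mem_image.1 (mem_of_mem_erase hp)
      exact filter_subset _ _)
    (by
      intro v hv
      refine ⟨cl (c v), ⟨mem_erase.2 ⟨?_, mem_image_of_mem _ (mem_univ _)⟩, ?_⟩, ?_⟩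
      · exact (Finset.nonempty_iff_ne_empty).1 ⟨v, by simp [hcl, hv]⟩
      · simp [hcl, hv]
      · rintro y ⟨hy, hvy⟩
        obtain ⟨x, _, rfl⟩ := mem_image.1 (mem_of_mem_erase hy)
        simp only [hcl, mem_filter] at hvy
        rw [hvy.2])
    (by simp)
  have hP : P.parts = (univ.image cl).erase ∅ := rfl
  have hab : (ℓ - (X.card - ℓ * t)) * t + (X.card - ℓ * t) * (t + 1) = X.card := by
    obtain ⟨b, hb⟩ := Nat.exists_eq_add_of_le h1
    have hb2 : X.card - ℓ * t = b := by omega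
    rw [hb2]
    have hbl : b ≤ ℓ := by rw [mul_add] at h2; omega
    obtain ⟨a, rfl⟩ := Nat.exists_eq_add_of_le hbl
    rw [hb, Nat.add_sub_cancel_left]; ring
  set Q := P.equitabilise hab with hQ
  have hQc : Q.parts.card = ℓ := by
    rw [hQ, P.card_parts_equitabilise hab ht]
    have : X.card - ℓ * t ≤ ℓ := by rw [mul_add] at h2; omega
    omega
  have hQs : ∀ u ∈ Q.parts, u.card = t ∨ u.card = t + 1 := fun u hu =>
    P.card_eq_of_mem_parts_equitabilise hu
  have hQm : ∀ x, ((cl x) \ (Q.parts.filter fun u => u ⊆ cl x).biUnion id).card ≤ t := by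
    intro x
    by_cases hx : cl x = ∅
    · rw [hx]; simp
    · exact P.card_parts_equitabilise_subset_le hab
        (by rw [hP]; exact mem_erase.2 ⟨hx, mem_image_of_mem _ (mem_univ _)⟩)
  let e : Fin ℓ ≃ Q.parts := (Fintype.equivOfCardEq (by simp [hQc]))
  refine ⟨fun i => (e i : Finset (Fin n)), ?_, ?_, ?_, ?_, ?_⟩
  · intro i j hij
    exact Q.disjoint (e i).2 (e j).2 (fun h => hij (e.injective (Subtype.ext h)))
  · intro v hv
    obtain ⟨u, hu, hvu⟩ := Q.exists_mem hv
    exact ⟨e.symm ⟨u, hu⟩, by simpa using hvu⟩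
  · intro i; exact Q.subset (e i).2
  · intro i; exact hQs _ (e i).2
  · have hs1 : ∑ i, (if ∃ x, ∀ v ∈ (e i : Finset (Fin n)), c v = x then 0 else
        (e i : Finset (Fin n)).card) =
        ∑ u ∈ Q.parts, (if ∃ x, ∀ v ∈ u, c v = x then 0 else u.card) := by
      rw [Equiv.sum_comp e (fun u : Q.parts => (if ∃ x, ∀ v ∈ (u : Finset (Fin n)), c v = x then 0 else
        (u : Finset (Fin n)).card))]
      exact Finset.sum_coe_sort Q.parts (fun u => if ∃ x, ∀ v ∈ u, c v = x then 0 else u.card)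
    rw [hs1]
    have hs2 : ∑ u ∈ Q.parts, (if ∃ x, ∀ v ∈ u, c v = x then 0 else u.card) =
        ((Q.parts.filter fun u => ¬ ∃ x, ∀ v ∈ u, c v = x).biUnion id).card := by
      rw [card_biUnion]
      · rw [sum_filter]
        apply sum_congr rfl
        intro u _
        by_cases h : ∃ x, ∀ v ∈ u, c v = x
        · rw [if_pos h, if_neg (not_not.2 h)]
        · rw [if_neg h, if_pos h]; rfl
      · intro u hu u' hu' hne
        exact Q.disjoint (mem_filter.1 hu).1 (mem_filter.1 hu').1 hne
    rw [hs2]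
    have hsub : ((Q.parts.filter fun u => ¬ ∃ x, ∀ v ∈ u, c v = x).biUnion id) ⊆
        (univ : Finset κ).biUnion fun x => (cl x) \ (Q.parts.filter fun u => u ⊆ cl x).biUnion id := by
      intro v hv
      simp only [mem_biUnion, id] at hv
      obtain ⟨u, hu, hvu⟩ := hv
      obtain ⟨huQ, hu⟩ := mem_filter.1 hu
      simp only [mem_biUnion, mem_univ, true_and]
      refine ⟨c v, ?_⟩
      rw [mem_sdiff]
      refine ⟨mem_filter.2 ⟨Q.subset huQ hvu, rfl⟩, ?_⟩
      simp only [mem_biUnion, id]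
      rintro ⟨u', hu', hvu'⟩
      obtain ⟨hu'Q, hu'⟩ := mem_filter.1 hu'
      have : u' = u := Q.eq_of_mem_parts hu'Q huQ hvu' hvu
      subst this
      exact hu ⟨c v, fun w hw => (mem_filter.1 (hu' hw)).2⟩
    calc _ ≤ _ := card_le_card hsub
      _ ≤ ∑ x : κ, ((cl x) \ (Q.parts.filter fun u => u ⊆ cl x).biUnion id).card := card_biUnion_le
      _ ≤ ∑ x : κ, t := sum_le_sum fun x _ => hQm x
      _ = _ := by simp

lemma partition_lemma {n p ℓ : ℕ} (Part : Fin p → Finset (Fin n)) (hPart : IsEquipartition Part)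
    (hp : 0 < p) (hℓ : 0 < ℓ) (hn : p * ℓ < n) {κ : Type} [Fintype κ] (c : Fin n → κ) :
    ∃ Q : Fin (p * ℓ) → Finset (Fin n), IsEquipartition Q ∧ (∀ i, (Q i).Nonempty) ∧
      (∀ i, ∃ j, Q i ⊆ Part j) ∧
      ℓ * ∑ i, (if ∃ x, ∀ v ∈ Q i, c v = x then 0 else (Q i).card) ≤ Fintype.card κ * n := by
  have : Nonempty (Fin p) := ⟨⟨0, hp⟩⟩
  obtain ⟨hd, hcov, heq⟩ := hPart
  have hsum : ∑ j, (Part j).card = n := by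
    rw [← card_biUnion (fun i _ j _ hij => hd i j hij)]
    have : univ.biUnion Part = univ := by
      ext v; simp [hcov v]
    rw [this]; simp
  obtain ⟨j0, hj0⟩ := Finite.exists_min (fun j => (Part j).card)
  set m := (Part j0).card with hm
  have hmℓ : ℓ ≤ m := by
    by_contra hlt
    have : ∑ j, (Part j).card ≤ ∑ j : Fin p, ℓ := sum_le_sum fun j _ => by
      have := heq j j0; omega
    rw [hsum] at this; simp at this; omega
  set t := m / ℓ with ht
  have ht0 : t ≠ 0 := by
    have := Nat.div_pos hmℓ hℓ; omega
  have ht1 : ℓ * t ≤ m := Nat.mul_div_le m ℓ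
  have ht2 : m < ℓ * (t + 1) := Nat.lt_mul_div_succ m hℓ
  have hsp := fun j => split_lemma c (Part j) ht0 (ht1.trans (hj0 j))
    (by have := heq j j0; omega : (Part j).card ≤ ℓ * (t + 1))
  choose R hR1 hR2 hR3 hR4 hR5 using hsp
  refine ⟨fun i => R (finProdFinEquiv.symm i).1 (finProdFinEquiv.symm i).2, ⟨?_, ?_, ?_⟩, ?_, ?_, ?_⟩
  · intro i i' hii
    by_cases h1 : (finProdFinEquiv.symm i).1 = (finProdFinEquiv.symm i').1
    · beta_reduce
      rw [h1]
      apply hR1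
      intro h2
      exact hii (finProdFinEquiv.symm.injective (Prod.ext h1 h2))
    · exact Finset.disjoint_of_subset_left (hR3 _ _)
        (Finset.disjoint_of_subset_right (hR3 _ _) (hd _ _ h1))
  · intro v
    obtain ⟨j, hj⟩ := hcov v
    obtain ⟨i, hi⟩ := hR2 j v hj
    exact ⟨finProdFinEquiv (j, i), by simpa using hi⟩
  · intro i i'
    have h1 := hR4 (finProdFinEquiv.symm i).1 (finProdFinEquiv.symm i).2
    have h2 := hR4 (finProdFinEquiv.symm i').1 (finProdFinEquiv.symm i').2
    simp only
    omega
  · intro i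
    rw [← card_pos]
    have h1 := hR4 (finProdFinEquiv.symm i).1 (finProdFinEquiv.symm i).2
    beta_reduce
    rcases h1 with h1 | h1 <;> rw [h1]
    · exact Nat.pos_of_ne_zero ht0
    · exact Nat.succ_pos t
  · intro i; exact ⟨_, hR3 _ _⟩
  · have h1 : ∑ i : Fin (p * ℓ), (if ∃ x, ∀ v ∈ R (finProdFinEquiv.symm i).1 (finProdFinEquiv.symm i).2,
        c v = x then 0 else (R (finProdFinEquiv.symm i).1 (finProdFinEquiv.symm i).2).card) =
        ∑ j, ∑ i, (if ∃ x, ∀ v ∈ R j i, c v = x then 0 else (R j i).card) := by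
      rw [Equiv.sum_comp finProdFinEquiv.symm (fun x : Fin p × Fin ℓ =>
        (if ∃ y, ∀ v ∈ R x.1 x.2, c v = y then 0 else (R x.1 x.2).card)), Fintype.sum_prod_type]
    simp only
    rw [h1]
    calc _ ≤ ℓ * ∑ j : Fin p, Fintype.card κ * t :=
          Nat.mul_le_mul_left _ (sum_le_sum fun j _ => hR5 j)
      _ = Fintype.card κ * ∑ j : Fin p, ℓ * t := by simp; ring
      _ ≤ Fintype.card κ * ∑ j, (Part j).card :=
          Nat.mul_le_mul_left _ (sum_le_sum fun j _ => ht1.trans (hj0 j))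
      _ = _ := by rw [hsum]

def ind {n : ℕ} (G : SimpleGraph (Fin n)) (u v : Fin n) : ℝ := if G.Adj u v then 1 else 0

def AA {n : ℕ} (G : SimpleGraph (Fin n)) (X Y : Finset (Fin n)) : ℝ :=
  ∑ u ∈ X, ∑ u' ∈ X, ∑ v ∈ Y, ind G u v * (1 - ind G u' v)

lemma ind_nonneg {n : ℕ} (G : SimpleGraph (Fin n)) (u v u' v' : Fin n) :
    0 ≤ ind G u v * (1 - ind G u' v') := by
  unfold ind; split_ifs <;> norm_num

lemma AA_nonneg {n : ℕ} (G : SimpleGraph (Fin n)) (X Y : Finset (Fin n)) : 0 ≤ AA G X Y :=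
  sum_nonneg fun _ _ => sum_nonneg fun _ _ => sum_nonneg fun _ _ => ind_nonneg _ _ _ _ _

lemma ind_comm {n : ℕ} (G : SimpleGraph (Fin n)) (u v : Fin n) : ind G u v = ind G v u := by
  unfold ind; simp [G.adj_comm]

lemma pair_ineq {n : ℕ} (G : SimpleGraph (Fin n)) (X Y : Finset (Fin n)) :
    (∑ u ∈ X, ∑ v ∈ Y, ind G u v) * (∑ u ∈ X, ∑ v ∈ Y, (1 - ind G u v)) ≤
      Y.card * AA G X Y + X.card * AA G Y X := by
  have h1 : (∑ u ∈ X, ∑ v ∈ Y, ind G u v) * (∑ u ∈ X, ∑ v ∈ Y, (1 - ind G u v)) =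
      ∑ u ∈ X, ∑ u' ∈ X, ∑ v ∈ Y, ∑ v' ∈ Y, ind G u v * (1 - ind G u' v') := by
    rw [sum_mul_sum]
    refine sum_congr rfl fun u _ => sum_congr rfl fun u' _ => ?_
    rw [sum_mul_sum]
  have h2 : (Y.card : ℝ) * AA G X Y =
      ∑ u ∈ X, ∑ u' ∈ X, ∑ v ∈ Y, ∑ v' ∈ Y, ind G u v * (1 - ind G u' v) := by
    unfold AA
    simp only [sum_const, nsmul_eq_mul, mul_sum]
  have h3 : (X.card : ℝ) * AA G Y X =
      ∑ u ∈ X, ∑ u' ∈ X, ∑ v ∈ Y, ∑ v' ∈ Y, ind G u' v * (1 - ind G u' v') := by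
    unfold AA
    rw [sum_const, nsmul_eq_mul]
    congr 1
    symm
    rw [sum_comm]
    refine sum_congr rfl fun v _ => ?_
    rw [sum_comm]
    refine sum_congr rfl fun v' _ => sum_congr rfl fun u _ => ?_
    rw [ind_comm G u v, ind_comm G u v']
  rw [h1, h2, h3]
  simp only [← sum_add_distrib]
  refine sum_le_sum fun u _ => sum_le_sum fun u' _ => sum_le_sum fun v _ => sum_le_sum fun v' _ => ?_
  unfold ind; split_ifs <;> norm_num

lemma nonhom_ineq {n : ℕ} (G : SimpleGraph (Fin n)) (δ : ℝ) (h0 : 0 < δ) (h1 : δ < 1 / 2)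
    (X Y : Finset (Fin n)) (hX : X.Nonempty) (hY : Y.Nonempty) (h : ¬ HomPair G δ X Y) :
    (X.card : ℝ) * Y.card ≤ 2 / δ * (AA G X Y / X.card + AA G Y X / Y.card) := by
  have hx : (0 : ℝ) < X.card := by exact_mod_cast hX.card_pos
  have hy : (0 : ℝ) < Y.card := by exact_mod_cast hY.card_pos
  have hE : ∑ u ∈ X, ∑ v ∈ Y, ind G u v = _root_.dens G X Y * (X.card * Y.card) := by
    have : ∑ u ∈ X, ∑ v ∈ Y, ind G u v = ((G.interedges X Y).card : ℝ) := by
      rw [SimpleGraph.interedges_def, card_filter, sum_product]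
      push_cast
      rfl
    rw [this]
    unfold _root_.dens
    rw [SimpleGraph.edgeDensity_def]
    push_cast
    field_simp
  have hF : ∑ u ∈ X, ∑ v ∈ Y, (1 - ind G u v) = (1 - _root_.dens G X Y) * (X.card * Y.card) := by
    simp only [sum_sub_distrib]
    rw [hE]; simp; ring
  have hp := pair_ineq G X Y
  rw [hE, hF] at hp
  unfold HomPair at h
  push Not at h
  obtain ⟨ha, hb⟩ := h
  set d := _root_.dens G X Y
  have hd : δ / 2 ≤ d * (1 - d) := by nlinarith
  have h5 : δ / 2 * (X.card * Y.card) * (X.card * Y.card) ≤ Y.card * AA G X Y + X.card * AA G Y X := by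
    refine le_trans ?_ hp
    have := mul_le_mul_of_nonneg_right hd (by positivity : (0 : ℝ) ≤ (X.card * Y.card) * (X.card * Y.card))
    nlinarith
  have h6 : (2 / δ * (AA G X Y / X.card + AA G Y X / Y.card)) =
     (Y.card * AA G X Y + X.card * AA G Y X) / (δ / 2 * (X.card * Y.card)) := by
    field_simp
  rw [h6, le_div_iff₀ (by positivity)]
  linarith

lemma homog {n q : ℕ} (G : SimpleGraph (Fin n)) (δ ε : ℝ) (h0 : 0 < δ) (h1 : δ < 1 / 2)
    (he : 0 < ε) (h8 : 8 * ε ≤ δ ^ 2) (Q : Fin q → Finset (Fin n))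
    (hd : ∀ i j : Fin q, i ≠ j → Disjoint (Q i) (Q j)) (hne : ∀ i, (Q i).Nonempty)
    (bad : Finset (Fin q))
    (hgood : ∀ i, i ∉ bad → ∀ u ∈ Q i, ∀ u' ∈ Q i, (dst G u u' : ℝ) ≤ 2 * ε * n)
    (hbad : ∑ i ∈ bad, ((Q i).card : ℝ) ≤ 2 * ε * n) :
    HomogeneousPartition G δ Q := by
  unfold HomogeneousPartition
  have hsum : ∑ i, ((Q i).card : ℝ) ≤ n := by
    have : ∑ i, (Q i).card ≤ n := by
      rw [← card_biUnion (fun i _ j _ hij => hd i j hij)]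
      exact (card_le_univ _).trans (by simp)
    exact_mod_cast this
  have hpos : ∀ i, (0 : ℝ) < (Q i).card := fun i => by exact_mod_cast (hne i).card_pos
  have hrow : ∀ i, ∑ j, AA G (Q i) (Q j) ≤ ∑ u ∈ Q i, ∑ u' ∈ Q i, (dst G u u' : ℝ) := by
    intro i
    unfold AA
    rw [sum_comm]
    refine sum_le_sum fun u _ => ?_
    rw [sum_comm]
    refine sum_le_sum fun u' _ => ?_
    rw [← sum_biUnion (fun i _ j _ hij => hd i j hij)]
    calc _ ≤ ∑ v : Fin n, ind G u v * (1 - ind G u' v) :=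
          sum_le_sum_of_subset_of_nonneg (subset_univ _) fun _ _ _ => ind_nonneg _ _ _ _ _
      _ ≤ ∑ v : Fin n, (if ¬ (G.Adj u v ↔ G.Adj u' v) then (1 : ℝ) else 0) := by
          refine sum_le_sum fun v _ => ?_
          unfold ind
          by_cases h1 : G.Adj u v <;> by_cases h2 : G.Adj u' v <;> simp [h1, h2]
      _ = _ := by rw [dst, card_filter]; push_cast; rfl
  have hrow2 : ∀ i, ∑ j, AA G (Q i) (Q j) / (Q i).card ≤
      2 * ε * n * (Q i).card + (if i ∈ bad then (n : ℝ) * (Q i).card else 0) := by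
    intro i
    rw [← sum_div, div_le_iff₀ (hpos i)]
    refine (hrow i).trans ?_
    by_cases hi : i ∈ bad
    · rw [if_pos hi]
      have : ∑ u ∈ Q i, ∑ u' ∈ Q i, (dst G u u' : ℝ) ≤ ∑ u ∈ Q i, ∑ u' ∈ Q i, (n : ℝ) := by
        refine sum_le_sum fun u _ => sum_le_sum fun u' _ => ?_
        have : dst G u u' ≤ n := (card_le_univ _).trans (by simp)
        exact_mod_cast this
      refine this.trans ?_
      simp only [sum_const, nsmul_eq_mul]
      have : 0 ≤ 2 * ε * n * (Q i).card * (Q i).card := by positivity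
      nlinarith
    · rw [if_neg hi]
      have : ∑ u ∈ Q i, ∑ u' ∈ Q i, (dst G u u' : ℝ) ≤ ∑ u ∈ Q i, ∑ u' ∈ Q i, (2 * ε * n) :=
        sum_le_sum fun u hu => sum_le_sum fun u' hu' => hgood i hi u hu u' hu'
      refine this.trans ?_
      simp only [sum_const, nsmul_eq_mul]
      linarith
  have htot : ∑ i, ∑ j, AA G (Q i) (Q j) / (Q i).card ≤ 4 * ε * n ^ 2 := by
    refine (sum_le_sum fun i _ => hrow2 i).trans ?_
    rw [sum_add_distrib, ← mul_sum, ← sum_filter]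
    simp only [filter_mem_eq_inter, univ_inter]
    rw [← mul_sum]
    have hn0 : (0 : ℝ) ≤ n := by positivity
    have a1 := mul_le_mul_of_nonneg_left hsum (by positivity : 0 ≤ 2 * ε * n)
    have a2 := mul_le_mul_of_nonneg_left hbad hn0
    nlinarith
  set T : Fin q → Fin q → ℝ := fun i j => AA G (Q i) (Q j) / (Q i).card with hT
  have hT0 : ∀ i j, 0 ≤ T i j := fun i j => div_nonneg (AA_nonneg _ _ _) (hpos i).le
  have hmain : ∑ i : Fin q, ∑ j : Fin q,
      (if i < j ∧ ¬ HomPair G δ (Q i) (Q j) then ((Q i).card : ℝ) * ((Q j).card : ℝ) else 0) ≤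
      2 / δ * ∑ i, ∑ j, T i j := by
    have b1 : ∑ i : Fin q, ∑ j : Fin q,
      (if i < j ∧ ¬ HomPair G δ (Q i) (Q j) then ((Q i).card : ℝ) * ((Q j).card : ℝ) else 0) ≤
      ∑ i : Fin q, ∑ j : Fin q, ((if i < j then 2 / δ * T i j else 0) +
        (if i < j then 2 / δ * T j i else 0)) := by
      refine sum_le_sum fun i _ => sum_le_sum fun j _ => ?_
      have := hT0 i j
      have := hT0 j i
      by_cases hij : i < j
      · simp only [hij, true_and, if_true]
        by_cases hh : HomPair G δ (Q i) (Q j)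
        · simp only [hh, not_true_eq_false, if_false]; positivity
        · have := nonhom_ineq G δ h0 h1 _ _ (hne i) (hne j) hh
          simp only [hh, not_false_eq_true, if_true]
          rw [← mul_add]; exact this
      · simp [hij]
    refine b1.trans ?_
    have b2 : ∑ i : Fin q, ∑ j : Fin q, (if i < j then 2 / δ * T j i else 0) =
        ∑ i : Fin q, ∑ j : Fin q, (if j < i then 2 / δ * T i j else 0) := sum_comm
    simp only [sum_add_distrib]
    rw [b2, ← sum_add_distrib, mul_sum]
    refine sum_le_sum fun i _ => ?_
    rw [← sum_add_distrib, mul_sum]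
    refine sum_le_sum fun j _ => ?_
    have := hT0 i j
    rcases lt_trichotomy i j with h | h | h
    · simp [h, h.not_gt]
    · subst h; simp; positivity
    · simp [h, h.not_gt]
  refine hmain.trans ?_
  have : 2 / δ * ∑ i, ∑ j, T i j ≤ 2 / δ * (4 * ε * n ^ 2) :=
    mul_le_mul_of_nonneg_left htot (by positivity)
  refine this.trans ?_
  rw [div_mul_eq_mul_div, div_le_iff₀ h0]
  have := mul_le_mul_of_nonneg_right h8 (by positivity : (0 : ℝ) ≤ (n : ℝ) ^ 2)
  nlinarith

lemma dst_comm {n : ℕ} (G : SimpleGraph (Fin n)) (u v : Fin n) : dst G u v = dst G v u := by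
  unfold dst; congr 1; ext x; simp only [mem_filter, mem_univ, true_and]; tauto

lemma dst_triangle {n : ℕ} (G : SimpleGraph (Fin n)) (u v w : Fin n) :
    dst G u w ≤ dst G u v + dst G v w := by
  unfold dst
  refine le_trans (card_le_card ?_) (card_union_le _ _)
  intro x
  simp only [mem_union, mem_filter, mem_univ, true_and]
  tauto

set_option maxHeartbeats 1000000 in
lemma cluster_case {n p A M : ℕ} (G : SimpleGraph (Fin n)) (δ ε : ℝ) (h0 : 0 < δ) (h1 : δ < 1 / 2)
    (he : 0 < ε) (h8 : 8 * ε ≤ δ ^ 2) (hA0 : 0 < A) (hA : 1 ≤ ε * A)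
    (Part : Fin p → Finset (Fin n)) (hPart : IsEquipartition Part) (hp : 0 < p)
    (hn : p * ((M + 1) * A) < n) (U : Finset (Fin n)) (hU : U.card ≤ M)
    (hfar : (((univ : Finset (Fin n)).filter fun v => ∀ u ∈ U, ε * n ≤ dst G u v).card : ℝ) < ε * n) :
    ∃ Q : Fin (p * ((M + 1) * A)) → Finset (Fin n), IsEquipartition Q ∧
      HomogeneousPartition G δ Q ∧ ∀ i, ∃ j : Fin p, Q i ⊆ Part j := by
  have hex : ∀ v : Fin n, ∃ x : Option U, (∀ u, x = some u → (dst G u v : ℝ) < ε * n) ∧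
      (x = none → ∀ u ∈ U, ε * n ≤ dst G u v) := by
    intro v
    by_cases h : ∀ u ∈ U, ε * n ≤ dst G u v
    · exact ⟨none, by simp, fun _ => h⟩
    · push Not at h
      obtain ⟨u, hu, hlt⟩ := h
      refine ⟨some ⟨u, hu⟩, ?_, by simp⟩
      intro u' hu'
      rw [← Option.some.inj hu']; exact hlt
  choose c hc1 hc2 using hex
  obtain ⟨Q, hQ, hQne, hQr, hQb⟩ := partition_lemma Part hPart hp (by positivity) hn c
  refine ⟨Q, hQ, ?_, hQr⟩
  set bad : Finset (Fin (p * ((M + 1) * A))) :=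
    univ.filter fun i => ¬ ∃ u : U, ∀ v ∈ Q i, c v = some u with hbaddef
  apply homog G δ ε h0 h1 he h8 Q hQ.1 hQne bad
  · intro i hi u hu u' hu'
    simp only [hbaddef, mem_filter, mem_univ, true_and, not_not] at hi
    obtain ⟨w, hw⟩ := hi
    have e1 := hc1 u w (hw u hu)
    have e2 := hc1 u' w (hw u' hu')
    have e3 := dst_triangle G u w u'
    rw [dst_comm G u w] at e3
    have e4 : (dst G u u' : ℝ) ≤ dst G w u + dst G w u' := by exact_mod_cast e3
    linarith
  · obtain ⟨S, hS⟩ : ∃ S : ℕ, S = ∑ i, (if ∃ x, ∀ v ∈ Q i, c v = x then 0 else (Q i).card) :=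
      ⟨_, rfl⟩
    have hQb' : (M + 1) * A * S ≤ Fintype.card (Option U) * n := by
      rw [hS]; convert hQb
    clear hQb
    have hcard : Fintype.card (Option U) ≤ M + 1 := by simp; exact hU
    have hS1 : A * S ≤ n := by
      have : (M + 1) * (A * S) ≤ (M + 1) * n := by
        rw [← mul_assoc]; exact hQb'.trans (Nat.mul_le_mul_right _ hcard)
      exact Nat.le_of_mul_le_mul_left this (by omega)
    have hS2 : (S : ℝ) ≤ ε * n := by
      have a1 : (A : ℝ) * S ≤ n := by exact_mod_cast hS1
      have a2 := mul_le_mul_of_nonneg_right hA (by positivity : (0 : ℝ) ≤ S)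
      have a3 := mul_le_mul_of_nonneg_left a1 he.le
      nlinarith
    have hnone : ∑ i, ((Q i).filter fun v => c v = none).card ≤
        ((univ : Finset (Fin n)).filter fun v => ∀ u ∈ U, ε * n ≤ dst G u v).card := by
      rw [← card_biUnion]
      · apply card_le_card
        intro v hv
        simp only [mem_biUnion, mem_univ, true_and, mem_filter] at hv ⊢
        obtain ⟨i, _, hvn⟩ := hv
        exact hc2 v hvn
      · intro i _ j _ hij
        exact disjoint_of_subset_left (filter_subset _ _)
          (disjoint_of_subset_right (filter_subset _ _) (hQ.1 i j hij))
    have hb : ∑ i ∈ bad, (Q i).card ≤ S + ∑ i, ((Q i).filter fun v => c v = none).card := by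
      rw [hS, ← sum_add_distrib, hbaddef, sum_filter]
      refine sum_le_sum fun i _ => ?_
      by_cases hbi : ∃ u : U, ∀ v ∈ Q i, c v = some u
      · simp [hbi]
      · rw [if_pos hbi]
        by_cases hm : ∃ x, ∀ v ∈ Q i, c v = x
        · rw [if_pos hm, zero_add]
          obtain ⟨x, hx⟩ := hm
          cases x with
          | some u => exact absurd ⟨u, hx⟩ hbi
          | none => rw [filter_true_of_mem hx]
        · rw [if_neg hm]; omega
    have hb2 : ∑ i ∈ bad, ((Q i).card : ℝ) ≤ S +
        ((univ : Finset (Fin n)).filter fun v => ∀ u ∈ U, ε * n ≤ dst G u v).card := by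
      exact_mod_cast hb.trans (Nat.add_le_add_left hnone _)
    linarith

lemma sauer_num {k A : ℕ} (hk : 1 ≤ k) (hA : 2 * k < A) :
    ∑ i ∈ Finset.range (2 * k), (A ^ 2).choose i < A ^ (4 * k + 1) := by
  have hA1 : 1 ≤ A ^ 2 := Nat.one_le_pow _ _ (by omega)
  calc _ ≤ ∑ i ∈ Finset.range (2 * k), A ^ (4 * k) := by
        refine sum_le_sum fun i hi => ?_
        rw [mem_range] at hi
        refine (Nat.choose_le_pow _ _).trans ?_
        calc (A ^ 2) ^ i ≤ (A ^ 2) ^ (2 * k) := Nat.pow_le_pow_right hA1 hi.le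
          _ = A ^ (4 * k) := by rw [← pow_mul]; congr 1; ring
    _ = 2 * k * A ^ (4 * k) := by simp
    _ < A * A ^ (4 * k) := Nat.mul_lt_mul_of_pos_right hA (Nat.pow_pos (by omega))
    _ = _ := by ring

lemma exp_num (r : ℕ) : ∃ A0 : ℕ, ∀ A : ℕ, A0 ≤ A → 2 * (A : ℝ) ^ r ≤ Real.exp A := by
  have h := (Real.tendsto_exp_div_pow_atTop r).comp tendsto_natCast_atTop_atTop
  obtain ⟨A0, hA0⟩ := Filter.eventually_atTop.1 (h.eventually_ge_atTop 2)
  refine ⟨max A0 1, fun A hA => ?_⟩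
  have h1 := hA0 A (le_trans (le_max_left _ _) hA)
  have h2 : (0 : ℝ) < A := by
    have := le_trans (le_max_right _ _) hA
    exact_mod_cast this
  simp only [Function.comp] at h1
  rwa [le_div_iff₀ (by positivity)] at h1

lemma hA_num (ε : ℝ) (h1 : ε ≤ 1) (A M : ℕ) (hA : 1 ≤ ε * A) :
    (2 : ℝ) ^ M * (1 - ε / 2) ^ (2 * (M + 1) * A) ≤ 1 / 2 := by
  have a1 : (1 - ε / 2) ^ (2 * (M + 1) * A) ≤ Real.exp (-(M + 1)) := by
    calc _ ≤ (Real.exp (-(ε / 2))) ^ (2 * (M + 1) * A) :=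
          pow_le_pow_left₀ (by linarith) (Real.one_sub_le_exp_neg _) _
      _ = Real.exp (-((M + 1) * (ε * A))) := by
          rw [← Real.exp_nat_mul]; congr 1; push_cast; ring
      _ ≤ _ := by
          apply Real.exp_le_exp.2
          have : (0 : ℝ) ≤ M + 1 := by positivity
          nlinarith
  have a2 : (2 : ℝ) ^ (M + 1) ≤ Real.exp (M + 1) := by
    have : Real.exp ((M : ℝ) + 1) = Real.exp 1 ^ (M + 1) := by
      rw [← Real.exp_nat_mul]; congr 1; push_cast; ring
    rw [this]
    apply pow_le_pow_left₀ (by norm_num)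
    have := Real.add_one_le_exp (1 : ℝ)
    linarith
  have a3 : Real.exp ((M : ℝ) + 1) * Real.exp (-(M + 1)) = 1 := by
    rw [← Real.exp_add]; simp
  have a4 : (0 : ℝ) < Real.exp (-((M : ℝ) + 1)) := Real.exp_pos _
  have a5 := mul_le_mul_of_nonneg_right a2 a4.le
  have a6 := mul_le_mul_of_nonneg_left a1 (by positivity : (0 : ℝ) ≤ 2 ^ M)
  rw [a3, pow_succ] at a5
  linarith

lemma hB_num (ε : ℝ) (h1 : ε ≤ 1) (A r : ℕ) (hA : 1 ≤ ε * A)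
    (hexp : 2 * (A : ℝ) ^ (2 * r) ≤ Real.exp A) :
    ((A ^ r : ℕ) : ℝ) ^ 2 * (1 - ε) ^ (A ^ 2) ≤ 1 / 2 := by
  have a1 : (1 - ε) ^ (A ^ 2) ≤ Real.exp (-A) := by
    calc _ ≤ (Real.exp (-ε)) ^ (A ^ 2) :=
          pow_le_pow_left₀ (by linarith) (Real.one_sub_le_exp_neg _) _
      _ = Real.exp (-(A * (ε * A))) := by
          rw [← Real.exp_nat_mul]; congr 1; push_cast; ring
      _ ≤ _ := by
          apply Real.exp_le_exp.2
          have : (0 : ℝ) ≤ A := by positivity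
          nlinarith
  have a3 : Real.exp (A : ℝ) * Real.exp (-A) = 1 := by
    rw [← Real.exp_add]; simp
  have a4 : (0 : ℝ) < Real.exp (-(A : ℝ)) := Real.exp_pos _
  have a5 := mul_le_mul_of_nonneg_right hexp a4.le
  have a6 := mul_le_mul_of_nonneg_left a1 (by positivity : (0 : ℝ) ≤ ((A ^ r : ℕ) : ℝ) ^ 2)
  have a7 : ((A ^ r : ℕ) : ℝ) ^ 2 = (A : ℝ) ^ (2 * r) := by push_cast; rw [← pow_mul]; congr 1; ring
  rw [a7] at a6 ⊢
  linarith

lemma param_num {k A r F : ℕ} (hA : 8 ≤ A) (hF : F = 1 + (r + 3) * k + 2 * k + (r + 2)) :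
    (A ^ r + 1) * A ≤ A ^ F ∧ 8 * ((2 * (A ^ r + 1) * A) ^ k * (A ^ 2) ^ k) ≤ A ^ F := by
  have h1 : 1 ≤ A ^ r := Nat.one_le_pow _ _ (by omega)
  have hM : A ^ r + 1 ≤ A ^ (r + 1) := by rw [pow_succ]; nlinarith
  constructor
  · calc _ ≤ A ^ (r + 1) * A := Nat.mul_le_mul_right _ hM
      _ = A ^ (r + 2) := by ring
      _ ≤ _ := Nat.pow_le_pow_right (by omega) (by rw [hF]; omega)
  · have h2 : 2 * (A ^ r + 1) * A ≤ A ^ (r + 3) := by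
      calc _ ≤ A * A ^ (r + 1) * A := Nat.mul_le_mul_right _ (Nat.mul_le_mul (by omega) hM)
        _ = _ := by ring
    calc _ ≤ A * ((A ^ (r + 3)) ^ k * (A ^ 2) ^ k) :=
          Nat.mul_le_mul hA (Nat.mul_le_mul_right _ (Nat.pow_le_pow_left h2 _))
      _ = A ^ (1 + (r + 3) * k + 2 * k) := by
          rw [← pow_mul, ← pow_mul, pow_add, pow_add, pow_one]; ring
      _ ≤ _ := Nat.pow_le_pow_right (by omega) (by rw [hF]; omega)

/-- the conditional regularity lemma, Lemma 2.10 of the paper. -/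
theorem conditional_regularity (k : ℕ) (hk : 1 ≤ k) :
    ∃ D : ℝ, 0 < D ∧
      ∀ B : Fin k → Fin k → Prop, ∀ δ : ℝ, 0 < δ → δ < 1 / 2 → ∀ P : ℕ, 1 ≤ P →
        ∃ n₀ : ℕ, ∀ n : ℕ, n₀ ≤ n → ∀ G : SimpleGraph (Fin n),
          ∀ p : ℕ, p ≤ P → ∀ Part : Fin p → Finset (Fin n), IsEquipartition Part →
            δ ^ D * (n : ℝ) ^ (2 * k) ≤ (bipCopyCount B G : ℝ) ∨
            ∃ q : ℕ, δ⁻¹ ≤ (q : ℝ) ∧ (q : ℝ) ≤ (p : ℝ) * δ ^ (-D) ∧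
              ∃ Q : Fin q → Finset (Fin n), IsEquipartition Q ∧
                HomogeneousPartition G δ Q ∧
                ∀ i : Fin q, ∃ j : Fin p, Q i ⊆ Part j := by
  obtain ⟨A1, hA1⟩ := exp_num (2 * (4 * k + 1))
  set A0 := max A1 (2 * k + 8) with hA0
  set r := 4 * k + 1 with hr
  obtain ⟨F, hF⟩ : ∃ F, F = 1 + (r + 3) * k + 2 * k + (r + 2) := ⟨_, rfl⟩
  refine ⟨(((A0 + 6) * F : ℕ) : ℝ), by
    have : 0 < (A0 + 6) * F := Nat.mul_pos (by omega) (by rw [hF]; omega)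
    exact_mod_cast this, ?_⟩
  intro B δ hδ0 hδ1 P hP
  set x := δ⁻¹ with hx
  have hx2 : 2 ≤ x := by
    rw [hx, le_inv_comm₀ (by norm_num) hδ0]; norm_num; linarith
  have hδx : δ * x = 1 := mul_inv_cancel₀ hδ0.ne'
  set ε := δ ^ 2 / 8 with hε
  have he0 : 0 < ε := by positivity
  have he1 : ε ≤ 1 := by rw [hε]; nlinarith
  set A := A0 * ⌈8 * x ^ 2⌉₊ with hA
  have hceil1 : 1 ≤ ⌈8 * x ^ 2⌉₊ := Nat.one_le_ceil_iff.2 (by positivity)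
  have hA0A : A0 ≤ A := Nat.le_mul_of_pos_right _ hceil1
  have hA0p : 1 ≤ A0 := by rw [hA0]; exact le_trans (by omega) (le_max_right _ _)
  have hAx : 8 * x ^ 2 ≤ A := by
    have : ⌈8 * x ^ 2⌉₊ ≤ A := Nat.le_mul_of_pos_left _ hA0p
    exact (Nat.le_ceil _).trans (by exact_mod_cast this)
  have hεA : 1 ≤ ε * A := by
    have h1 := mul_le_mul_of_nonneg_left hAx he0.le
    have h2 : ε * (8 * x ^ 2) = 1 := by
      rw [hε]
      calc δ ^ 2 / 8 * (8 * x ^ 2) = (δ * x) ^ 2 := by ring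
        _ = 1 := by rw [hδx]; norm_num
    linarith
  have hA8 : 2 * k + 8 ≤ A := le_trans (le_max_right _ _) hA0A
  have hAup : (A : ℝ) ≤ x ^ (A0 + 6) := by
    have h1 : (A0 : ℝ) ≤ x ^ A0 := by
      have h2 : (A0 : ℝ) ≤ 2 ^ A0 := by exact_mod_cast (Nat.lt_two_pow_self (n := A0)).le
      exact h2.trans (pow_le_pow_left₀ (by norm_num) hx2 _)
    have h3 : (⌈8 * x ^ 2⌉₊ : ℝ) ≤ x ^ 6 := by
      have h4 := (Nat.ceil_lt_add_one (by positivity : 0 ≤ 8 * x ^ 2)).le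
      have h5 : (2 : ℝ) ^ 4 ≤ x ^ 4 := pow_le_pow_left₀ (by norm_num) hx2 _
      have h6 : (2 : ℝ) ^ 2 ≤ x ^ 2 := pow_le_pow_left₀ (by norm_num) hx2 _
      have h7 : x ^ 6 = x ^ 4 * x ^ 2 := by ring
      nlinarith
    rw [hA, pow_add]; push_cast
    exact mul_le_mul h1 h3 (by positivity) (by positivity)
  have hAF : ((A ^ F : ℕ) : ℝ) ≤ x ^ ((A0 + 6) * F) := by
    push_cast
    rw [pow_mul]
    exact pow_le_pow_left₀ (by positivity) hAup _
  obtain ⟨hp1, hp2⟩ := param_num (k := k) (A := A) (r := r) (F := F) (by omega) hF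
  set M := A ^ r with hM
  set N := 2 * (M + 1) * A with hN
  set L := N ^ k * (A ^ 2) ^ k with hL
  refine ⟨P * ((M + 1) * A) + 1 + 8 * L * (2 * k) ^ 2, ?_⟩
  intro n hn G p hpP Part hPart
  have hn0 : 0 < n := by omega
  have hnR : (0 : ℝ) < n := by exact_mod_cast hn0
  have hp0 : 0 < p := by
    obtain ⟨i, _⟩ := hPart.2.1 ⟨0, hn0⟩
    exact lt_of_le_of_lt (Nat.zero_le _) i.2
  have hx0 : 0 < x := by linarith
  by_cases h : ∀ U : Finset (Fin n), U.card ≤ M →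
      ε * n ≤ (((univ : Finset (Fin n)).filter fun v => ∀ u ∈ U, ε * n ≤ dst G u v).card : ℝ)
  · left
    have h1 := many_copies hk hn0 G B ε he0 he1 M N (A ^ 2) (hA_num ε he1 A M hεA)
      (hB_num ε he1 A r hεA (hA1 A (le_trans (le_max_left _ _) hA0A)))
      (sauer_num hk (by omega)) h
    have h2 := copies_lower G B
    have h3 := noninj_count (n := n) (κ := Fin k ⊕ Fin k)
    rw [Fintype.card_sum, Fintype.card_fin, ← two_mul] at h3
    set X := ((univ : Finset (Fin k ⊕ Fin k → Fin n)).filter fun φ => ¬ Function.Injective φ).card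
    set Y := ((univ : Finset ((Fin k → Fin n) × (Fin k → Fin n))).filter fun x =>
        ∀ s t, B s t ↔ G.Adj (x.1 s) (x.2 t)).card
    have h4 : 8 * L * X ≤ n ^ (2 * k) := by
      have : n * (8 * L * X) ≤ n * n ^ (2 * k) := by
        calc n * (8 * L * X) = 8 * L * (X * n) := by ring
          _ ≤ 8 * L * ((2 * k) ^ 2 * n ^ (2 * k)) := Nat.mul_le_mul_left _ h3
          _ = (8 * L * (2 * k) ^ 2) * n ^ (2 * k) := by ring
          _ ≤ _ := Nat.mul_le_mul_right _ (by omega)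
      exact Nat.le_of_mul_le_mul_left this hn0
    have h5 : n ^ (2 * k) ≤ 8 * L * bipCopyCount B G := by
      have : n ^ (2 * k) ≤ 4 * L * (bipCopyCount B G + X) := h1.trans (Nat.mul_le_mul_left _ h2)
      nlinarith
    have h6 : n ^ (2 * k) ≤ A ^ F * bipCopyCount B G := h5.trans (Nat.mul_le_mul_right _ hp2)
    have h7 : (n : ℝ) ^ (2 * k) ≤ ((A ^ F : ℕ) : ℝ) * bipCopyCount B G := by exact_mod_cast h6
    rw [Real.rpow_natCast]
    have h8 : (n : ℝ) ^ (2 * k) ≤ x ^ ((A0 + 6) * F) * bipCopyCount B G :=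
      h7.trans (mul_le_mul_of_nonneg_right hAF (by positivity))
    calc _ ≤ δ ^ ((A0 + 6) * F) * (x ^ ((A0 + 6) * F) * bipCopyCount B G) :=
          mul_le_mul_of_nonneg_left h8 (by positivity)
      _ = (δ * x) ^ ((A0 + 6) * F) * bipCopyCount B G := by rw [mul_pow]; ring
      _ = _ := by rw [hδx]; simp
  · right
    push Not at h
    obtain ⟨U, hU, hfar⟩ := h
    have hlt : p * ((M + 1) * A) < n := by
      have := Nat.mul_le_mul_right ((M + 1) * A) hpP
      omega
    obtain ⟨Q, hQ1, hQ2, hQ3⟩ := cluster_case G δ ε hδ0 hδ1 he0 (by rw [hε]; linarith)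
      (by omega) hεA Part hPart hp0 hlt U hU hfar
    refine ⟨p * ((M + 1) * A), ?_, ?_, Q, hQ1, hQ2, hQ3⟩
    · have h1 : A ≤ p * ((M + 1) * A) := by
        rw [← mul_assoc]; exact Nat.le_mul_of_pos_left _ (by positivity)
      have h2 : (A : ℝ) ≤ ((p * ((M + 1) * A) : ℕ) : ℝ) := by exact_mod_cast h1
      nlinarith
    · rw [Real.rpow_neg hδ0.le, Real.rpow_natCast, ← inv_pow, Nat.cast_mul]
      apply mul_le_mul_of_nonneg_left _ (by positivity)
      exact le_trans (by exact_mod_cast hp1) hAF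


end
end

section
/- For every integer k ≥ 2 there is α = α(k) > 0 such that for every positive integer m there is a set S ⊆ {1,…,m} with |S| ≥ m/e^{α·√(log m)} having the following property: for every 2 ≤ ℓ ≤ k and all positive integers a₁,…,a_ℓ with a₁ + … + a_ℓ ≤ k, the only solutions of the equation a₁s₁ + a₂s₂ + … + a_ℓ s_ℓ = (a₁ + … + a_ℓ)·s_{ℓ+1} with s₁,…,s_{ℓ+1} ∈ S are the trivial ones, i.e. s₁ = s₂ = … = s_ℓ = s_{ℓ+1}. -/
open scoped Classical
open Finset

noncomputable section

lemma sphere_convex_aux {n ℓ r : ℕ} (a : Fin ℓ → ℕ) (ha : ∀ i, 1 ≤ a i)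
    (x : Fin ℓ → Fin n → ℕ) (y : Fin n → ℕ)
    (hx : ∀ j, ∑ i, x j i ^ 2 = r) (hy : ∑ i, y i ^ 2 = r)
    (h : ∀ i, ∑ j, a j * x j i = (∑ j, a j) * y i) : ∀ j, x j = y := by
  have hx' : ∀ j, ∑ i, (x j i : ℤ) ^ 2 = r := fun j => by exact_mod_cast hx j
  have hy' : ∑ i, (y i : ℤ) ^ 2 = r := by exact_mod_cast hy
  have h' : ∀ i, ∑ j, (a j : ℤ) * x j i = (∑ j, (a j : ℤ)) * y i := fun i => by exact_mod_cast h i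
  have key : ∑ j, (a j : ℤ) * ∑ i, ((x j i : ℤ) - y i) ^ 2 = 0 := by
    have e1 : ∀ j, (a j : ℤ) * ∑ i, ((x j i : ℤ) - y i) ^ 2
        = 2 * r * a j - 2 * ∑ i, (a j : ℤ) * x j i * y i := by
      intro j
      have : ∑ i, ((x j i : ℤ) - y i) ^ 2
          = ∑ i, (x j i : ℤ) ^ 2 + ∑ i, (y i : ℤ) ^ 2 - 2 * ∑ i, (x j i : ℤ) * y i := by
        rw [Finset.mul_sum, ← Finset.sum_add_distrib, ← Finset.sum_sub_distrib]
        exact Finset.sum_congr rfl fun i _ => by ring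
      rw [this, hx', hy']
      simp only [mul_assoc, ← Finset.mul_sum]
      ring
    rw [Finset.sum_congr rfl fun j _ => e1 j, Finset.sum_sub_distrib, ← Finset.mul_sum,
      ← Finset.mul_sum, Finset.sum_comm]
    have e2 : ∀ i, ∑ j, (a j : ℤ) * x j i * y i = (∑ j, (a j : ℤ)) * (y i : ℤ) ^ 2 := by
      intro i
      rw [← Finset.sum_mul, h']; ring
    rw [Finset.sum_congr rfl fun i _ => e2 i, ← Finset.mul_sum, hy']
    ring
  intro j
  have h0 : ∀ j, (0 : ℤ) ≤ ∑ i, ((x j i : ℤ) - y i) ^ 2 :=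
    fun j => Finset.sum_nonneg fun i _ => sq_nonneg _
  have hj := (Finset.sum_eq_zero_iff_of_nonneg
    (fun j _ => mul_nonneg (Int.natCast_nonneg (a j)) (h0 j))).1 key j (Finset.mem_univ j)
  have haj : (a j : ℤ) ≠ 0 := by have := ha j; omega
  have hz := (mul_eq_zero.1 hj).resolve_left haj
  funext i
  have := (Finset.sum_eq_zero_iff_of_nonneg (fun i _ => sq_nonneg _)).1 hz i (Finset.mem_univ i)
  have := pow_eq_zero_iff (two_ne_zero) |>.1 this
  omega

lemma map_lt_pow_aux {n b : ℕ} (x : Fin n → ℕ) (hx : ∀ i, x i < b) :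
    Behrend.map b x < b ^ n := by
  induction n with
  | zero => simp [Behrend.map]
  | succ n ih =>
    rw [Behrend.map_succ']
    have h1 := ih (x ∘ Fin.succ) (fun i => hx _)
    have h2 := hx 0
    rw [pow_succ]
    nlinarith

lemma construction_aux (k n d : ℕ) (hk : 1 ≤ k) :
    ∃ S : Finset ℕ, (S : Set ℕ) ⊆ Set.Icc 1 ((k * d) ^ n) ∧
      ((d ^ n : ℕ) / (n * d ^ 2 : ℕ) : ℝ) ≤ (S.card : ℝ) ∧
      ∀ ℓ : ℕ, ∀ a : Fin ℓ → ℕ, (∀ i, 1 ≤ a i) → (∑ i, a i) ≤ k →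
        ∀ s : Fin ℓ → ℕ, (∀ i, s i ∈ S) → ∀ s' ∈ S,
          (∑ i, a i * s i) = (∑ i, a i) * s' → ∀ i, s i = s' := by
  obtain ⟨r, hr⟩ := Behrend.exists_large_sphere n d
  have hdk : d ≤ k * d := Nat.le_mul_of_pos_left d hk
  have hbox : ∀ x ∈ Behrend.sphere n d r, ∀ i, x i < d := fun x hx =>
    Behrend.mem_box.1 (Behrend.sphere_subset_box hx)
  have hrad : ∀ x ∈ Behrend.sphere n d r, ∑ i, x i ^ 2 = r := fun x hx =>
    (Finset.mem_filter.1 hx).2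
  refine ⟨(Behrend.sphere n d r).image (fun x => Behrend.map (k * d) x + 1), ?_, ?_, ?_⟩
  · intro s hs
    simp only [Finset.coe_image, Set.mem_image, Finset.mem_coe] at hs
    obtain ⟨x, hx, rfl⟩ := hs
    exact ⟨by omega, map_lt_pow_aux x fun i => (hbox x hx i).trans_le hdk⟩
  · rw [Finset.card_image_of_injOn]
    · exact hr
    · intro x hx y hy hxy
      exact Behrend.map_injOn (d := k * d) (fun i => (hbox x hx i).trans_le hdk)
        (fun i => (hbox y hy i).trans_le hdk) (by simpa using hxy)
  · intro ℓ a ha hak s hs s' hs' heq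
    simp only [Finset.mem_image] at hs hs'
    choose x hx hxs using hs
    obtain ⟨y, hy, rfl⟩ := hs'
    have hlt : ∀ z : Fin ℓ → Fin n → ℕ, (∀ j i, z j i < d) → ∀ i, ∑ j, a j * z j i < k * d := by
      intro z hz i
      have hd : 0 < d := by
        rcases Nat.eq_zero_or_pos d with h | h
        · have := hbox y hy i; omega
        · exact h
      have h1 : ∑ j, a j * z j i ≤ ∑ j, a j * (d - 1) :=
        Finset.sum_le_sum fun j _ => Nat.mul_le_mul_left _ (by have := hz j i; omega)
      rw [← Finset.sum_mul] at h1
      calc _ ≤ _ := h1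
        _ ≤ k * (d - 1) := Nat.mul_le_mul_right _ hak
        _ < k * d := Nat.mul_lt_mul_of_pos_left (by omega) hk
    have hm : Behrend.map (k * d) (∑ j, a j • x j) = Behrend.map (k * d) ((∑ j, a j) • y) := by
      rw [map_sum]
      simp only [map_nsmul, smul_eq_mul]
      simp only [← hxs, mul_add, Finset.sum_add_distrib, mul_one] at heq
      omega
    have hv := Behrend.map_injOn (d := k * d)
      (fun i => by
        have := hlt x (fun j => hbox _ (hx j)) i
        simpa [Finset.sum_apply] using this)
      (fun i => by
        have := hlt (fun _ => y) (fun j => hbox _ hy) i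
        rw [← Finset.sum_mul] at this
        simpa using this) hm
    have hxy := sphere_convex_aux a ha x y (fun j => hrad _ (hx j)) (hrad _ hy)
      (fun i => by simpa [Finset.sum_apply] using congrFun hv i)
    intro i
    rw [← hxs, hxy]

/-- the Behrend-type construction, Lemma 3.2 of the paper. -/
theorem behrend_no_convex_solutions (k : ℕ) (hk : 2 ≤ k) :
    ∃ α : ℝ, 0 < α ∧ ∀ m : ℕ, 1 ≤ m →
      ∃ S : Finset ℕ, (S : Set ℕ) ⊆ Set.Icc 1 m ∧
        (m : ℝ) / Real.exp (α * Real.sqrt (Real.log m)) ≤ (S.card : ℝ) ∧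
        ∀ ℓ : ℕ, 2 ≤ ℓ → ℓ ≤ k →
          ∀ a : Fin ℓ → ℕ, (∀ i, 1 ≤ a i) → (∑ i, a i) ≤ k →
            ∀ s : Fin ℓ → ℕ, (∀ i, s i ∈ S) → ∀ s' ∈ S,
              (∑ i, a i * s i) = (∑ i, a i) * s' → ∀ i, s i = s' := by
  have hk0 : (2 : ℝ) ≤ k := by exact_mod_cast hk
  have hlogk : 0 < Real.log (2 * k) := Real.log_pos (by linarith)
  refine ⟨2 * Real.log (2 * k) + 4, by positivity, fun m hm => ?_⟩
  have hm0 : (1 : ℝ) ≤ m := by exact_mod_cast hm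
  set L := Real.sqrt (Real.log m) with hL
  have hL0 : 0 ≤ L := Real.sqrt_nonneg _
  have hL2 : L ^ 2 = Real.log m := Real.sq_sqrt (Real.log_nonneg hm0)
  have hmexp : (m : ℝ) = Real.exp (L ^ 2) := by rw [hL2, Real.exp_log (by linarith)]
  by_cases hsmall : L ≤ 2 * Real.log (2 * k) + 4
  · refine ⟨{1}, by simpa using hm, ?_, ?_⟩
    · rw [div_le_iff₀ (Real.exp_pos _), hmexp]
      simp only [Finset.card_singleton, Nat.cast_one, one_mul]
      exact Real.exp_le_exp.2 (by nlinarith)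
    · intro ℓ _ _ a _ _ s hs s' hs' _ i
      rw [Finset.mem_singleton.1 (hs i), Finset.mem_singleton.1 hs']
  push Not at hsmall
  have hL1 : 1 ≤ L := by linarith
  set n := ⌈L⌉₊ with hn
  have hn1 : L ≤ n := Nat.le_ceil L
  have hn2 : (n : ℝ) ≤ 2 * L := by linarith [Nat.ceil_lt_add_one hL0]
  have hnpos : (0 : ℝ) < n := by linarith
  set M := Real.exp (L ^ 2 / n) with hM
  have hMn : M ^ n = m := by
    rw [hM, ← Real.exp_nat_mul, hmexp]
    congr 1
    field_simp
  have hMpos : 0 < M := Real.exp_pos _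
  have hMk : 2 * k ≤ M := by
    rw [← Real.exp_log (show (0 : ℝ) < 2 * k by linarith), hM]
    apply Real.exp_le_exp.2
    rw [le_div_iff₀ hnpos]
    nlinarith
  have hkpos : (0 : ℝ) < k := by linarith
  set d := ⌊M / k⌋₊ with hd
  have hd1 : (d : ℝ) ≤ M / k := Nat.floor_le (by positivity)
  have hd2 : M / (2 * k) ≤ d := by
    have h1 : M / k - 1 < d := Nat.sub_one_lt_floor _
    have h2 : 1 ≤ M / (2 * k) := by rw [le_div_iff₀ (by positivity)]; linarith
    have h3 : M / k = 2 * (M / (2 * k)) := by field_simp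
    linarith
  have hkd : (k : ℝ) * d ≤ M := by
    have := (le_div_iff₀' hkpos).1 hd1
    exact this
  have hdM : (d : ℝ) ≤ M := by nlinarith [Nat.cast_nonneg (α := ℝ) d]
  have hdpos : (0 : ℝ) < d := lt_of_lt_of_le (by positivity) hd2
  obtain ⟨S, hS1, hS2, hS3⟩ := construction_aux k n d (by omega)
  refine ⟨S, ?_, ?_, fun ℓ _ _ => hS3 ℓ⟩
  · have : (k * d) ^ n ≤ m := by
      have : ((k : ℝ) * d) ^ n ≤ m := by
        rw [← hMn]
        exact pow_le_pow_left₀ (by positivity) hkd n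
      exact_mod_cast this
    exact hS1.trans (Set.Icc_subset_Icc_right this)
  · refine le_trans ?_ hS2
    push_cast
    rw [div_le_div_iff₀ (Real.exp_pos _) (by positivity)]
    have e1 : (m : ℝ) ≤ (2 * k) ^ n * (d : ℝ) ^ n := by
      rw [← hMn, ← mul_pow]
      apply pow_le_pow_left₀ hMpos.le
      exact (div_le_iff₀' (by positivity)).1 hd2
    have e2 : ((2 : ℝ) * k) ^ n ≤ Real.exp (2 * Real.log (2 * k) * L) := by
      rw [← Real.exp_log (show (0 : ℝ) < 2 * k by linarith), ← Real.exp_nat_mul, Real.log_exp]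
      apply Real.exp_le_exp.2
      nlinarith
    have e3 : (n : ℝ) ≤ Real.exp (2 * L) := by
      linarith [Real.add_one_le_exp (2 * L)]
    have e4 : (d : ℝ) ^ 2 ≤ Real.exp (2 * L) := by
      calc (d : ℝ) ^ 2 ≤ M ^ 2 := pow_le_pow_left₀ hdpos.le hdM 2
        _ ≤ Real.exp (2 * L) := by
          rw [hM, ← Real.exp_nat_mul]
          apply Real.exp_le_exp.2
          have : L ^ 2 / n ≤ L := by rw [div_le_iff₀ hnpos]; nlinarith
          push_cast
          linarith
    calc (m : ℝ) * (n * (d : ℝ) ^ 2)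
        ≤ (Real.exp (2 * Real.log (2 * k) * L) * (d : ℝ) ^ n) *
            (Real.exp (2 * L) * Real.exp (2 * L)) := by
          apply mul_le_mul _ _ (by positivity) (by positivity)
          · exact e1.trans (mul_le_mul_of_nonneg_right e2 (by positivity))
          · exact mul_le_mul e3 e4 (by positivity) (by positivity)
      _ = (d : ℝ) ^ n * Real.exp ((2 * Real.log (2 * k) + 4) * L) := by
          rw [show (2 * Real.log (2 * k) + 4) * L
            = 2 * Real.log (2 * k) * L + (2 * L + 2 * L) by ring, Real.exp_add, Real.exp_add]
          ring

end
end

section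
/- For every integer h ≥ 3 there exist δ₀ = δ₀(h) > 0 and β = β(h) > 0 such that for every δ ∈ (0, δ₀) there is a graph R with the following properties: (1) V(R) = V₁ ∪ … ∪ V_h where each V_i is an independent set of R; (2) |V(R)| ≥ (1/δ)^{β·log(1/δ)}; (3) the edge set of R is the union of the edge sets of at least δ·|V(R)|² pairwise edge-disjoint cliques of size h; (4) for every 3 ≤ t ≤ h and every sequence 1 ≤ i₁ < i₂ < … < i_t ≤ h, R contains at most |V(R)|² (not necessarily induced) cycles of the form v_{i₁}v_{i₂}…v_{i_t}v_{i₁} with v_{i_j} ∈ V_{i_j} for every j. -/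
open scoped Classical
open Finset

noncomputable section

lemma rs_cast_inj {q a b : ℕ} (ha : a < q) (hb : b < q) (hab : (a : ZMod q) = b) : a = b := by
  rw [ZMod.natCast_eq_natCast_iff'] at hab
  rwa [Nat.mod_eq_of_lt ha, Nat.mod_eq_of_lt hb] at hab

/-- reduction of an integer vector -/
def rsC {d : ℕ} (q : ℕ) (s : Fin d → ℕ) : Fin d → ZMod q := fun c => (s c : ZMod q)

lemma rs_smul_inj {d k h a : ℕ} (ha : 0 < a) (hah : a < h) {s s' : Fin d → ℕ}
    (hs : ∀ c, s c < k) (hs' : ∀ c, s' c < k)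
    (hE : a • rsC (h * k) s = a • rsC (h * k) s') : s = s' := by
  funext c
  have h1 := congrFun hE c
  simp only [rsC, Pi.smul_apply, nsmul_eq_mul] at h1
  have h2 : a * s c = a * s' c := by
    apply rs_cast_inj (q := h * k)
    · exact Nat.mul_lt_mul'' hah (hs c)
    · exact Nat.mul_lt_mul'' hah (hs' c)
    · push_cast; exact h1
  exact Nat.eq_of_mul_eq_mul_left ha h2

lemma rs_core {d k h r n : ℕ} (I : ℕ → ℕ) (hI : ∀ j < n, I j < I (j+1)) (hIn : I n < h)
    (x : ℕ → Fin d → ZMod (h * k)) (s : ℕ → Fin d → ℕ)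
    (hk : ∀ j ≤ n, ∀ c, s j c < k) (hr : ∀ j ≤ n, ∑ c, s j c ^ 2 = r)
    (hx : ∀ j < n, x (j+1) - x j = (I (j+1) - I j) • rsC (h * k) (s j))
    (hxn : x n - x 0 = (I n - I 0) • rsC (h * k) (s n)) :
    ∀ j < n, s j = s n := by
  -- telescoping of I
  have hIz : ∀ m ≤ n, ∑ j ∈ range m, (I (j+1) - I j) = I m - I 0 ∧ I 0 ≤ I m := by
    intro m
    induction m with
    | zero => intro _; simp
    | succ m ih =>
      intro hm
      obtain ⟨h1, h2⟩ := ih (by omega)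
      have := hI m (by omega)
      rw [Finset.sum_range_succ, h1]
      omega
  obtain ⟨hT, hI0⟩ := hIz n le_rfl
  -- integer equation
  have heq : ∀ c, ∑ j ∈ range n, (I (j+1) - I j) * s j c = (I n - I 0) * s n c := by
    intro c
    have hkc := hk n le_rfl c
    apply rs_cast_inj (q := h * k)
    · have : ∑ j ∈ range n, (I (j+1) - I j) * s j c ≤ (I n - I 0) * (k - 1) := by
        rw [← hT, Finset.sum_mul]
        apply Finset.sum_le_sum
        intro j hj
        have := hk j (Finset.mem_range.mp hj).le c
        exact Nat.mul_le_mul_left _ (by omega)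
      refine lt_of_le_of_lt this ?_
      exact Nat.mul_lt_mul'' (by omega) (by omega)
    · exact Nat.mul_lt_mul'' (by omega) hkc
    · have h1 := congrFun hxn c
      have h2 : ∑ j ∈ range n, (x (j+1) - x j) = x n - x 0 := Finset.sum_range_sub x n
      rw [Finset.sum_congr rfl (fun j hj => hx j (Finset.mem_range.mp hj))] at h2
      have h3 := congrFun (h2.trans hxn) c
      simp only [rsC, Finset.sum_apply, Pi.smul_apply, nsmul_eq_mul] at h3
      push_cast
      exact h3
  -- convexity
  have hsum : ∑ j ∈ range n, ((I (j+1) - I j : ℕ) : ℤ) * ∑ c, ((s j c : ℤ) - s n c) ^ 2 = 0 := by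
    have hrz : ∀ j ≤ n, ∑ c, (s j c : ℤ) ^ 2 = r := fun j hj => by exact_mod_cast hr j hj
    have heqz : ∀ c, ∑ j ∈ range n, ((I (j+1) - I j : ℕ) : ℤ) * (s j c : ℤ)
        = ((I n - I 0 : ℕ) : ℤ) * s n c := fun c => by exact_mod_cast heq c
    have hTz : ∑ j ∈ range n, ((I (j+1) - I j : ℕ) : ℤ) = ((I n - I 0 : ℕ) : ℤ) := by
      exact_mod_cast hT
    generalize ((I n - I 0 : ℕ) : ℤ) = A at *
    have e1 : ∀ j ∈ range n, ((I (j+1) - I j : ℕ) : ℤ) * ∑ c, ((s j c : ℤ) - s n c) ^ 2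
        = ((I (j+1) - I j : ℕ) : ℤ) * (2 * r)
          - 2 * ∑ c, (((I (j+1) - I j : ℕ) : ℤ) * (s j c : ℤ)) * s n c := by
      intro j hj
      have : ∑ c, ((s j c : ℤ) - s n c) ^ 2
          = ∑ c, (s j c : ℤ) ^ 2 + ∑ c, (s n c : ℤ) ^ 2 - 2 * ∑ c, (s j c : ℤ) * s n c := by
        rw [Finset.mul_sum, ← Finset.sum_add_distrib, ← Finset.sum_sub_distrib]
        exact Finset.sum_congr rfl fun c _ => by ring
      rw [this, hrz j (Finset.mem_range.mp hj).le, hrz n le_rfl]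
      simp only [mul_assoc]
      rw [← Finset.mul_sum]
      ring
    rw [Finset.sum_congr rfl e1, Finset.sum_sub_distrib, ← Finset.sum_mul, hTz, ← Finset.mul_sum,
      Finset.sum_comm]
    simp only [← Finset.sum_mul, heqz]
    have : ∑ c, A * (s n c : ℤ) * s n c = A * r := by
      rw [← hrz n le_rfl, Finset.mul_sum]
      exact Finset.sum_congr rfl fun c _ => by ring
    rw [this]; ring
  intro j hj
  rw [Finset.sum_eq_zero_iff_of_nonneg (fun j _ => by positivity)] at hsum
  have h1 := hsum j (Finset.mem_range.mpr hj)
  have h2 := hI j hj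
  have h3 : ((I (j+1) - I j : ℕ) : ℤ) ≠ 0 := by
    have : I (j+1) - I j ≠ 0 := by omega
    exact_mod_cast this
  have h4 := (mul_eq_zero.mp h1).resolve_left h3
  rw [Finset.sum_eq_zero_iff_of_nonneg (fun c _ => by positivity)] at h4
  funext c
  have h5 := h4 c (Finset.mem_univ c)
  have h6 := pow_eq_zero_iff (two_ne_zero) |>.mp h5
  have : (s j c : ℤ) = s n c := by linarith
  exact_mod_cast this

lemma rs_params (h : ℕ) (hh : 3 ≤ h) (δ : ℝ) (hδ : 0 < δ) (hδ0 : δ < Real.exp (-(20 * h))) :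
    ∃ d k : ℕ, 0 < d ∧ 0 < k ∧
      (1 / δ) ^ ((1 / (200 * (h:ℝ) ^ 2)) * Real.log (1 / δ)) ≤ ((h * (h * k) ^ d : ℕ) : ℝ) ∧
      δ * ((h : ℝ) ^ (d + 2) * (d * k ^ 2)) ≤ 1 := by
  have hhR : (3:ℝ) ≤ h := by exact_mod_cast hh
  obtain ⟨L, hL⟩ : ∃ L, L = Real.log (1 / δ) := ⟨_, rfl⟩
  have hδL : 1 / δ = Real.exp L := by rw [hL, Real.exp_log (by positivity)]
  have hδe : δ = Real.exp (-L) := by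
    rw [Real.exp_neg, ← hδL]; simp
  have hL20 : 20 * (h:ℝ) < L := by
    rw [hδe, Real.exp_lt_exp] at hδ0; linarith
  obtain ⟨y, hy⟩ : ∃ y, y = L / (10 * h) := ⟨_, rfl⟩
  have hLy : L = 10 * h * y := by rw [hy]; field_simp
  have hy2 : 2 < y := by
    rw [hLy] at hL20; nlinarith
  refine ⟨⌊y⌋₊, ⌊Real.exp y⌋₊, ?_, ?_, ?_, ?_⟩
  · exact Nat.floor_pos.mpr (by linarith)
  · exact Nat.floor_pos.mpr (by linarith [Real.add_one_le_exp y])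
  · have hd : y / 2 ≤ (⌊y⌋₊ : ℝ) := by linarith [Nat.lt_floor_add_one y]
    have hk : Real.exp y ≤ h * (⌊Real.exp y⌋₊ : ℝ) := by
      have := Nat.lt_floor_add_one (Real.exp y)
      have := Real.add_one_le_exp y
      nlinarith
    rw [← hL, hδL, ← Real.exp_mul]
    push_cast
    calc Real.exp (L * (1 / (200 * (h:ℝ) ^ 2) * L)) = Real.exp (y / 2 * y) := by
          congr 1; rw [hLy]; field_simp; norm_num
      _ ≤ Real.exp (⌊y⌋₊ * y) := by
          apply Real.exp_le_exp.mpr; nlinarith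
      _ = Real.exp y ^ ⌊y⌋₊ := by rw [Real.exp_nat_mul]
      _ ≤ (h * (⌊Real.exp y⌋₊ : ℝ)) ^ ⌊y⌋₊ := by gcongr
      _ ≤ _ := le_mul_of_one_le_left (by positivity) (by linarith)
  · have hd : (⌊y⌋₊ : ℝ) ≤ y := Nat.floor_le (by linarith)
    have hk : (⌊Real.exp y⌋₊ : ℝ) ≤ Real.exp y := Nat.floor_le (by positivity)
    have hhe : (h:ℝ) ≤ Real.exp h := by linarith [Real.add_one_le_exp (h:ℝ)]
    have hye : y ≤ Real.exp y := by linarith [Real.add_one_le_exp y]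
    have h1 : (h:ℝ) ^ (⌊y⌋₊ + 2) ≤ Real.exp (h * (y + 2)) := by
      calc (h:ℝ) ^ (⌊y⌋₊ + 2) ≤ Real.exp h ^ (⌊y⌋₊ + 2) := by gcongr
        _ = Real.exp ((⌊y⌋₊ + 2 : ℕ) * h) := by rw [Real.exp_nat_mul]
        _ ≤ _ := by
          apply Real.exp_le_exp.mpr
          push_cast; nlinarith
    have h2 : (⌊y⌋₊ : ℝ) * (⌊Real.exp y⌋₊ : ℝ) ^ 2 ≤ Real.exp (3 * y) := by
      calc (⌊y⌋₊ : ℝ) * (⌊Real.exp y⌋₊ : ℝ) ^ 2 ≤ Real.exp y * Real.exp y ^ 2 := by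
            gcongr; linarith
        _ = Real.exp (3 * y) := by
            rw [show 3 * y = ((3:ℕ):ℝ) * y by norm_num, Real.exp_nat_mul]; ring
    calc δ * ((h : ℝ) ^ (⌊y⌋₊ + 2) * (⌊y⌋₊ * (⌊Real.exp y⌋₊:ℝ) ^ 2))
        ≤ Real.exp (-L) * (Real.exp (h * (y + 2)) * Real.exp (3 * y)) := by
          rw [hδe]; gcongr
      _ = Real.exp (-L + (h * (y + 2) + 3 * y)) := by rw [Real.exp_add, Real.exp_add]
      _ ≤ 1 := by
          rw [Real.exp_le_one_iff, hLy]; nlinarith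

lemma rs_diff {G : Type*} [AddCommGroup G] {a b : ℕ} (hab : a ≤ b) {x y z c : G}
    (hx : x = z + a • c) (hy : y = z + b • c) : y - x = (b - a) • c := by
  obtain ⟨e, rfl⟩ := Nat.exists_eq_add_of_le hab
  rw [hx, hy, Nat.add_sub_cancel_left, add_nsmul]
  abel

lemma rs_core2 {d k h r n : ℕ} (I : ℕ → ℕ) (hI : ∀ j < n, I j < I (j+1)) (hIn : I n < h)
    (x : ℕ → Fin d → ZMod (h * k)) (s : ℕ → Fin d → ℕ)
    (hk : ∀ j ≤ n, ∀ c, s j c < k) (hr : ∀ j ≤ n, ∑ c, s j c ^ 2 = r)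
    (hx : ∀ j < n, x (j+1) - x j = (I (j+1) - I j) • rsC (h * k) (s j))
    (hxn : x n - x 0 = (I n - I 0) • rsC (h * k) (s n)) :
    ∀ j ≤ n, x j = x 0 + (I j - I 0) • rsC (h * k) (s n) ∧ I 0 ≤ I j := by
  have hs := rs_core I hI hIn x s hk hr hx hxn
  intro j
  induction j with
  | zero => intro _; simp
  | succ j ih =>
    intro hj
    obtain ⟨h1, h2⟩ := ih (by omega)
    have h3 := hx j (by omega)
    have h4 := hI j (by omega)
    rw [hs j (by omega)] at h3
    refine ⟨?_, by omega⟩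
    rw [show I (j+1) - I 0 = (I j - I 0) + (I (j+1) - I j) by omega, add_nsmul, ← h3, ← add_assoc,
      ← h1]
    abel

lemma rs_two {d k h i j : ℕ} (hi : i < h) (hj : j < h) (hij : i ≠ j) {s s' : Fin d → ℕ}
    (hs : ∀ c, s c < k) (hs' : ∀ c, s' c < k) {z z' : Fin d → ZMod (h * k)}
    (h1 : z + i • rsC (h * k) s = z' + i • rsC (h * k) s')
    (h2 : z + j • rsC (h * k) s = z' + j • rsC (h * k) s') : z = z' ∧ s = s' := by
  have key : s = s' := by
    rcases lt_or_gt_of_ne hij with hlt | hlt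
    · have a1 := rs_diff hlt.le (rfl : z + i • rsC (h * k) s = _) rfl
      have a2 := rs_diff hlt.le (rfl : z' + i • rsC (h * k) s' = _) rfl
      rw [h1, h2] at a1
      exact rs_smul_inj (by omega) (by omega) hs hs' (a1.symm.trans a2)
    · have a1 := rs_diff hlt.le (rfl : z + j • rsC (h * k) s = _) rfl
      have a2 := rs_diff hlt.le (rfl : z' + j • rsC (h * k) s' = _) rfl
      rw [h1, h2] at a1
      exact rs_smul_inj (by omega) (by omega) hs hs' (a1.symm.trans a2)
  subst key
  exact ⟨add_right_cancel h1, rfl⟩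

/-- the graph on `Fin h × G` -/
def rsGraph (d k h r : ℕ) : SimpleGraph (Fin h × (Fin d → ZMod (h * k))) where
  Adj u v := u.1 ≠ v.1 ∧ ∃ z, ∃ s ∈ Behrend.sphere d k r,
    u.2 = z + u.1.1 • rsC (h * k) s ∧ v.2 = z + v.1.1 • rsC (h * k) s
  symm := ⟨fun _ _ ⟨h1, z, s, hs, h2, h3⟩ => ⟨h1.symm, z, s, hs, h3, h2⟩⟩
  loopless := ⟨fun _ h => h.1 rfl⟩

lemma rs_sphere {d k r : ℕ} {s : Fin d → ℕ} (hs : s ∈ Behrend.sphere d k r) :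
    (∀ c, s c < k) ∧ ∑ c, s c ^ 2 = r := by
  simpa [Behrend.sphere, Behrend.mem_box] using hs

lemma rs_cycle {d k h r t : ℕ} (ht : 3 ≤ t) (idx : Fin t → Fin h) (hidx : StrictMono idx)
    (v : Fin t → Fin h × (Fin d → ZMod (h * k))) (hv : ∀ j, (v j).1 = idx j)
    (hadj : ∀ j : Fin t, (rsGraph d k h r).Adj (v j) (v ⟨(j.1 + 1) % t, Nat.mod_lt _ (by omega)⟩)) :
    ∃ s ∈ Behrend.sphere d k r, ∀ j : Fin t,
      (v j).2 = (v ⟨0, by omega⟩).2 + ((idx j).1 - (idx ⟨0, by omega⟩).1) • rsC (h * k) s := by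
  obtain ⟨n, rfl⟩ : ∃ n, t = n + 1 := ⟨t - 1, by omega⟩
  choose hne z s hs hz1 hz2 using hadj
  let f : ℕ → Fin (n+1) := fun j => ⟨j % (n+1), Nat.mod_lt _ (by omega)⟩
  have hf : ∀ j (hj : j ≤ n), f j = ⟨j, by omega⟩ := fun j hj =>
    Fin.ext (Nat.mod_eq_of_lt (by omega))
  have hf1 : ∀ j, (⟨((f j).1 + 1) % (n+1), Nat.mod_lt _ (by omega)⟩ : Fin (n+1)) = f (j+1) := fun j =>
    Fin.ext (Nat.mod_add_mod _ _ _)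
  have hfn : f (n+1) = f 0 := Fin.ext (by simp [f])
  have hmono : ∀ j < n, (idx (f j)).1 < (idx (f (j+1))).1 := by
    intro j hj
    rw [hf j hj.le, hf (j+1) hj]
    exact hidx (by simp [Fin.lt_def])
  have hmono0 : (idx (f 0)).1 ≤ (idx (f n)).1 := by
    rw [hf 0 (by omega), hf n le_rfl]
    exact hidx.monotone (by simp [Fin.le_def])
  have hz1' : ∀ j, (v (f j)).2 = z (f j) + (idx (f j)).1 • rsC (h * k) (s (f j)) := fun j => by
    rw [← hv]; exact hz1 (f j)
  have hz2' : ∀ j, (v (f (j+1))).2 = z (f j) + (idx (f (j+1))).1 • rsC (h * k) (s (f j)) := fun j => by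
    rw [← hv, ← hf1]; exact hz2 (f j)
  have main := rs_core2 (d := d) (k := k) (h := h) (r := r) (n := n) (fun j => (idx (f j)).1) hmono
    (idx (f n)).2 (fun j => (v (f j)).2) (fun j => s (f j))
    (fun j _ => (rs_sphere (hs _)).1) (fun j _ => (rs_sphere (hs _)).2)
    (fun j hj => rs_diff (hmono j hj).le (hz1' j) (hz2' j))
    (by
      have h2 := hz2' n
      rw [hfn] at h2
      have := rs_diff hmono0 h2 (hz1' n)
      exact this)
  refine ⟨s (f n), hs _, fun j => ?_⟩
  have h1 := (main j.1 (by omega)).1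
  have h2 : f j.1 = j := hf j.1 (by omega)
  have h3 : f 0 = ⟨0, by omega⟩ := hf 0 (by omega)
  simp only [h2, h3] at h1
  exact h1

/-- the Ruzsa–Szemerédi-type construction, Lemma 3.3 of the paper. -/
theorem exists_RS_construction (h : ℕ) (hh : 3 ≤ h) :
    ∃ δ₀ β : ℝ, 0 < δ₀ ∧ 0 < β ∧ ∀ δ : ℝ, 0 < δ → δ < δ₀ →
      ∃ (N : ℕ) (R : SimpleGraph (Fin N)) (V : Fin h → Finset (Fin N)),
        -- (1) V₁ ∪ … ∪ V_h is a partition into independent sets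
        ((∀ i j : Fin h, i ≠ j → Disjoint (V i) (V j)) ∧ (∀ v : Fin N, ∃ i, v ∈ V i) ∧
          (∀ i : Fin h, ∀ u ∈ V i, ∀ v ∈ V i, ¬ R.Adj u v)) ∧
        -- (2) the number of vertices is at least (1/δ)^(β log(1/δ))
        ((1 / δ) ^ (β * Real.log (1 / δ)) ≤ (N : ℝ)) ∧
        -- (3) E(R) is the union of at least δ|V(R)|² pairwise edge-disjoint h-cliques
        (∃ 𝓚 : Finset (Finset (Fin N)),
          δ * (N : ℝ) ^ 2 ≤ (𝓚.card : ℝ) ∧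
          (∀ K ∈ 𝓚, R.IsNClique h K) ∧
          (∀ K ∈ 𝓚, ∀ K' ∈ 𝓚, K ≠ K' → (K ∩ K').card ≤ 1) ∧
          (∀ u v : Fin N, R.Adj u v → ∃ K ∈ 𝓚, u ∈ K ∧ v ∈ K)) ∧
        -- (4) for every 3 ≤ t ≤ h and increasing index sequence, at most N² cycles
        (∀ t : ℕ, ∀ ht3 : 3 ≤ t, t ≤ h → ∀ idx : Fin t → Fin h, StrictMono idx →
          (Set.ncard {v : Fin t → Fin N | Function.Injective v ∧
            (∀ j : Fin t, v j ∈ V (idx j)) ∧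
            (∀ j : Fin t, R.Adj (v j) (v ⟨(j.1 + 1) % t, Nat.mod_lt _ (by omega)⟩))} : ℝ)
            ≤ (N : ℝ) ^ 2) := by
  refine ⟨Real.exp (-(20 * h)), 1 / (200 * (h:ℝ) ^ 2), by positivity, by positivity, ?_⟩
  intro δ hδ hδ0
  obtain ⟨d, k, hd, hk, hN, hδ1⟩ := rs_params h hh δ hδ hδ0
  obtain ⟨r, hr⟩ := Behrend.exists_large_sphere d k
  have hq : 0 < h * k := by positivity
  have : NeZero (h * k) := ⟨hq.ne'⟩
  have hcard : Fintype.card (Fin h × (Fin d → ZMod (h * k))) = h * (h * k) ^ d := by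
    simp [ZMod.card]
  let e : Fin (h * (h * k) ^ d) ≃ Fin h × (Fin d → ZMod (h * k)) :=
    (Fintype.equivFinOfCardEq hcard).symm
  let P : (Fin d → ZMod (h * k)) → (Fin d → ℕ) → Fin h → Fin (h * (h * k) ^ d) :=
    fun z s i => e.symm (i, z + i.1 • rsC (h * k) s)
  have hP : ∀ z s i, e (P z s i) = (i, z + i.1 • rsC (h * k) s) := fun z s i => by simp [P]
  have hPinj : ∀ z s, Function.Injective (P z s) := fun z s i j hij => by
    have := congrArg (fun u => (e u).1) hij
    simpa [hP] using this
  let K : (Fin d → ZMod (h * k)) × (Fin d → ℕ) → Finset (Fin (h * (h * k) ^ d)) :=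
    fun p => Finset.univ.image (P p.1 p.2)
  have hK : ∀ p u, u ∈ K p ↔ (e u).2 = p.1 + (e u).1.1 • rsC (h * k) p.2 := by
    intro p u
    simp only [K, Finset.mem_image, Finset.mem_univ, true_and]
    constructor
    · rintro ⟨i, rfl⟩; rw [hP]
    · intro hu; exact ⟨(e u).1, e.injective (by rw [hP, ← hu])⟩
  -- two cliques sharing two points coincide
  have hshare : ∀ p p' : (Fin d → ZMod (h * k)) × (Fin d → ℕ), p.2 ∈ Behrend.sphere d k r →
      p'.2 ∈ Behrend.sphere d k r → ∀ u v, u ≠ v → u ∈ K p → v ∈ K p → u ∈ K p' → v ∈ K p' →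
      p = p' := by
    intro p p' hp hp' u v huv h1 h2 h3 h4
    rw [hK] at h1 h2 h3 h4
    have hne : (e u).1 ≠ (e v).1 := by
      intro hE
      apply huv
      apply e.injective
      refine Prod.ext hE ?_
      rw [h1, h2, hE]
    obtain ⟨a, b⟩ := rs_two (e u).1.2 (e v).1.2 (fun hE => hne (Fin.ext hE)) (rs_sphere hp).1
      (rs_sphere hp').1 (h1.symm.trans h3) (h2.symm.trans h4)
    exact Prod.ext a b
  refine ⟨h * (h * k) ^ d, (rsGraph d k h r).comap e,
    fun i => Finset.univ.filter fun u => (e u).1 = i, ⟨?_, ?_, ?_⟩, hN, ?_, ?_⟩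
  · intro i j hij
    rw [Finset.disjoint_left]
    intro u hu hu'
    simp only [Finset.mem_filter, Finset.mem_univ, true_and] at hu hu'
    exact hij (hu.symm.trans hu')
  · intro v; exact ⟨(e v).1, by simp⟩
  · intro i u hu v hv hadj
    simp only [Finset.mem_filter, Finset.mem_univ, true_and] at hu hv
    exact hadj.1 (hu.trans hv.symm)
  · refine ⟨((Finset.univ : Finset (Fin d → ZMod (h * k))) ×ˢ Behrend.sphere d k r).image K,
      ?_, ?_, ?_, ?_⟩
    · rw [Finset.card_image_of_injOn]
      · rw [Finset.card_product]
        have hc : (Finset.univ : Finset (Fin d → ZMod (h * k))).card = (h * k) ^ d := by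
          simp [ZMod.card]
        rw [hc]
        push_cast
        push_cast at hr
        have hkR : (0:ℝ) < k := by exact_mod_cast hk
        have hdR : (0:ℝ) < d := by exact_mod_cast hd
        have hhR : (0:ℝ) < h := by positivity
        have h1 : δ * ((h:ℝ) ^ 2 * ((h:ℝ) * k) ^ d) ≤ (k:ℝ) ^ d / (d * k ^ 2) := by
          rw [le_div_iff₀ (by positivity)]
          calc δ * ((h:ℝ) ^ 2 * ((h:ℝ) * k) ^ d) * ((d:ℝ) * (k:ℝ) ^ 2)
              = (δ * ((h : ℝ) ^ (d + 2) * (d * k ^ 2))) * k ^ d := by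
                rw [mul_pow, pow_add]; ring
            _ ≤ 1 * (k:ℝ) ^ d := by gcongr
            _ = _ := one_mul _
        calc δ * ((h:ℝ) * ((h:ℝ) * k) ^ d) ^ 2
            = ((h:ℝ) * k) ^ d * (δ * ((h:ℝ) ^ 2 * ((h:ℝ) * k) ^ d)) := by ring
          _ ≤ ((h:ℝ) * k) ^ d * ((Behrend.sphere d k r).card : ℝ) := by
              gcongr
              exact h1.trans hr
      · intro p hp p' hp' hE
        simp only [Finset.coe_product, Set.mem_prod, Finset.mem_coe] at hp hp'
        let i0 : Fin h := ⟨0, by omega⟩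
        let i1 : Fin h := ⟨1, by omega⟩
        have m0 : ∀ i, P p.1 p.2 i ∈ K p := fun i => Finset.mem_image_of_mem _ (Finset.mem_univ _)
        refine hshare p p' hp.2 hp'.2 (P p.1 p.2 i0) (P p.1 p.2 i1) ?_ (m0 _) (m0 _)
          (hE ▸ m0 _) (hE ▸ m0 _)
        intro hc
        have := hPinj _ _ hc
        simp [i0, i1] at this
    · intro Q hQ
      obtain ⟨p, hp, rfl⟩ := Finset.mem_image.mp hQ
      rw [Finset.mem_product] at hp
      refine ⟨?_, ?_⟩
      · intro u hu v hv huv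
        rw [Finset.mem_coe, hK] at hu hv
        refine ⟨fun hE => huv (e.injective (Prod.ext hE ?_)), p.1, p.2, hp.2, hu, hv⟩
        rw [hu, hv, hE]
      · rw [Finset.card_image_of_injective _ (hPinj _ _)]; simp
    · intro Q hQ Q' hQ' hne
      obtain ⟨p, hp, rfl⟩ := Finset.mem_image.mp hQ
      obtain ⟨p', hp', rfl⟩ := Finset.mem_image.mp hQ'
      rw [Finset.mem_product] at hp hp'
      rw [Finset.card_le_one]
      intro u hu v hv
      rw [Finset.mem_inter] at hu hv
      by_contra huv
      exact hne (congrArg K (hshare p p' hp.2 hp'.2 u v huv hu.1 hv.1 hu.2 hv.2))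
    · rintro u v ⟨_, z, s, hs, h1, h2⟩
      exact ⟨K (z, s), Finset.mem_image_of_mem _ (by simp [hs]), (hK _ _).mpr h1, (hK _ _).mpr h2⟩
  · intro t ht3 hth idx hidx
    have hcardprod : Set.ncard (Set.univ : Set (Fin (h * (h * k) ^ d) × Fin (h * (h * k) ^ d)))
        = (h * (h * k) ^ d) ^ 2 := by
      rw [Set.ncard_univ, Nat.card_eq_fintype_card, Fintype.card_prod, Fintype.card_fin, sq]
    rw [← Nat.cast_pow, Nat.cast_le, ← hcardprod]
    refine Set.ncard_le_ncard_of_injOn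
      (fun v => (v ⟨0, by omega⟩, v ⟨1, by omega⟩)) (fun _ _ => Set.mem_univ _) ?_ Set.finite_univ
    rintro v ⟨_, hv1, hv2⟩ w ⟨_, hw1, hw2⟩ hvw
    simp only [Finset.mem_filter, Finset.mem_univ, true_and] at hv1 hw1
    obtain ⟨s, hs, hvs⟩ := rs_cycle ht3 idx hidx (fun j => e (v j)) hv1 hv2
    obtain ⟨s', hs', hws⟩ := rs_cycle ht3 idx hidx (fun j => e (w j)) hw1 hw2
    simp only [Prod.mk.injEq] at hvw
    obtain ⟨h0, h1⟩ := hvw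
    have hlt : (idx ⟨0, by omega⟩).1 < (idx ⟨1, by omega⟩).1 := hidx (by simp [Fin.lt_def])
    have hss : s = s' := by
      have a := hvs ⟨1, by omega⟩
      have b := hws ⟨1, by omega⟩
      simp only [h0, h1] at a b
      have hlt2 := (idx ⟨1, by omega⟩).2
      exact rs_smul_inj (by omega) (by omega) (rs_sphere hs).1 (rs_sphere hs').1
        (add_left_cancel (a.symm.trans b))
    funext j
    apply e.injective
    refine Prod.ext ((hv1 j).trans (hw1 j).symm) ?_
    have a := hvs j
    have b := hws j
    simp only [h0, hss] at a b
    exact a.trans b.symm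

end
end

section
/- Let M be the complement of the graph on vertex set {1,2,3,4,5,6,7} whose only edges are {1,2}, {3,4}, {5,6}. Let G be a graph with a vertex partition V(G) = X₁ ∪ … ∪ X₈ such that X₁, X₃, X₅, X₇ are cliques, X₂, X₄, X₆, X₈ are independent sets, and there are no edges between X_i and X_j unless |i − j| ≡ ±1 (mod 8). Then: (1) every induced copy of the 8-cycle C₈ in G has exactly one vertex in each part X_i, and its vertices can be written as x₁x₂…x₈x₁ with x_i ∈ X_i; (2) G contains no induced copy of M. -/
/-- Colour constraint for a pair of adjacent vertices. -/
def okA (a b : Fin 8) : Bool := (a == b && a.1 % 2 == 0) || b == a + 1 || a == b + 1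

/-- Colour constraint for a pair of distinct non-adjacent vertices. -/
def okN (a b : Fin 8) : Bool := !(a == b) || a.1 % 2 == 1

set_option synthInstance.maxSize 2000 in
set_option synthInstance.maxHeartbeats 400000 in
theorem key_cycle : ∀ a b : Fin 8, okA a b = true →
    ∀ c : Fin 8, (okA b c && okN a c) = true →
    ∀ d : Fin 8, (okA c d && okN a d && okN b d) = true →
    ∀ e : Fin 8, (okA d e && okN a e && okN b e && okN c e) = true →
    ∀ f : Fin 8, (okA e f && okN a f && okN b f && okN c f && okN d f) = true →
    ∀ g : Fin 8, (okA f g && okN a g && okN b g && okN c g && okN d g && okN e g) = true →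
    ∀ h : Fin 8, (okA g h && okA h a && okN b h && okN c h && okN d h && okN e h && okN f h)
      = true →
    ((b = a + 1 ∧ c = a + 2 ∧ d = a + 3 ∧ e = a + 4 ∧ f = a + 5 ∧ g = a + 6 ∧ h = a + 7) ∨
     (b = a - 1 ∧ c = a - 2 ∧ d = a - 3 ∧ e = a - 4 ∧ f = a - 5 ∧ g = a - 6 ∧ h = a - 7)) := by
  decide +kernel


set_option synthInstance.maxSize 2000 in
set_option synthInstance.maxHeartbeats 400000 in
theorem key_M : ∀ z a : Fin 8, okA z a = true →
    ∀ b : Fin 8, (okA z b && okN a b) = true →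
    ∀ c : Fin 8, (okA z c && okA a c && okA b c) = true →
    ∀ d : Fin 8, (okA z d && okA a d && okA b d && okN c d) = true →
    ∀ e : Fin 8, (okA z e && okA a e && okA b e && okA c e && okA d e) = true →
    ∀ f : Fin 8, (okA z f && okA a f && okA b f && okA c f && okA d f && okN e f) = true →
    False := by
  decide +kernel

open scoped Classical
open Finset

noncomputable section

/-- The graph `M`: the complement of the graph on `{1,…,7}` (here `Fin 7`) whose only edges
are `{1,2}, {3,4}, {5,6}`. -/
def Mgraph : SimpleGraph (Fin 7) :=
  (SimpleGraph.fromEdgeSet {s((0 : Fin 7), 1), s(2, 3), s(4, 5)})ᶜ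

/-- Lemma 3.4 of the paper. `X i` here is the part `X_{i+1}` of the paper,
so the cliques `X₁, X₃, X₅, X₇` are the parts with even index `i : Fin 8`. -/
theorem induced_C8_structure_and_M_free {V : Type*} (G : SimpleGraph V)
    (X : Fin 8 → Set V)
    (hdisj : ∀ i j : Fin 8, i ≠ j → Disjoint (X i) (X j))
    (hcover : ∀ v : V, ∃ i, v ∈ X i)
    (hclique : ∀ i : Fin 8, i.1 % 2 = 0 → ∀ u ∈ X i, ∀ v ∈ X i, u ≠ v → G.Adj u v)
    (hindep : ∀ i : Fin 8, i.1 % 2 = 1 → ∀ u ∈ X i, ∀ v ∈ X i, ¬ G.Adj u v)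
    (hcross : ∀ i j : Fin 8, i ≠ j → ∀ u ∈ X i, ∀ v ∈ X j, G.Adj u v →
      (j = i + 1 ∨ i = j + 1)) :
    (∀ f : SimpleGraph.cycleGraph 8 ↪g G,
      (∀ i : Fin 8, ∃! v : V, v ∈ Set.range f ∧ v ∈ X i) ∧
      (∃ x : Fin 8 → V, Set.range x = Set.range f ∧ (∀ i : Fin 8, x i ∈ X i) ∧
        ∀ i : Fin 8, G.Adj (x i) (x (i + 1)))) ∧
    IsEmpty (Mgraph ↪g G) := by
  have hA : ∀ (u v : V) (i j : Fin 8), u ∈ X i → v ∈ X j → G.Adj u v → okA i j = true := by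
    intro u v i j hu hv h
    by_cases hij : i = j
    · subst hij
      have : i.1 % 2 = 0 := by
        by_contra h2
        exact hindep i (by omega) u hu v hv h
      simp [okA, this]
    · rcases hcross i j hij u hu v hv h with h' | h'
      · simp [okA, h']
      · simp [okA, h']
  have hN : ∀ (u v : V) (i j : Fin 8), u ∈ X i → v ∈ X j → u ≠ v → ¬ G.Adj u v →
      okN i j = true := by
    intro u v i j hu hv huv h
    by_cases hij : i = j
    · subst hij
      have : i.1 % 2 = 1 := by
        by_contra h2
        exact h (hclique i (by omega) u hu v hv huv)
      simp [okN, this]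
    · simp [okN, hij]
  constructor
  · intro f
    choose c hc using fun i => hcover (f i)
    have eA : ∀ i j : Fin 8, (SimpleGraph.cycleGraph 8).Adj i j → okA (c i) (c j) = true :=
      fun i j h => hA _ _ _ _ (hc i) (hc j) (f.map_adj_iff.2 h)
    have eN : ∀ i j : Fin 8, i ≠ j → ¬ (SimpleGraph.cycleGraph 8).Adj i j →
        okN (c i) (c j) = true :=
      fun i j hij h => hN _ _ _ _ (hc i) (hc j) (fun e => hij (f.injective e))
        (fun e => h (f.map_adj_iff.1 e))
    have adj : ∀ i j : Fin 8, (SimpleGraph.cycleGraph 8).Adj i j ↔ (i - j = 1 ∨ j - i = 1) :=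
      fun i j => SimpleGraph.cycleGraph_adj
    simp only [adj] at eA eN
    have A : ∀ i j : Fin 8, (i - j = 1 ∨ j - i = 1) → okA (c i) (c j) = true := eA
    have N : ∀ i j : Fin 8, i ≠ j → ¬ (i - j = 1 ∨ j - i = 1) → okN (c i) (c j) = true := eN
    have K := key_cycle (c 0) (c 1) (A _ _ (by decide))
      (c 2) (by simp only [Bool.and_eq_true]; exact ⟨A _ _ (by decide), N _ _ (by decide) (by decide)⟩)
      (c 3) (by
        simp only [Bool.and_eq_true]; refine ⟨⟨A _ _ ?_, N _ _ ?_ ?_⟩, N _ _ ?_ ?_⟩ <;> decide)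
      (c 4) (by
        simp only [Bool.and_eq_true]
        refine ⟨⟨⟨A _ _ ?_, N _ _ ?_ ?_⟩, N _ _ ?_ ?_⟩, N _ _ ?_ ?_⟩ <;> decide)
      (c 5) (by
        simp only [Bool.and_eq_true]
        refine ⟨⟨⟨⟨A _ _ ?_, N _ _ ?_ ?_⟩, N _ _ ?_ ?_⟩, N _ _ ?_ ?_⟩, N _ _ ?_ ?_⟩ <;> decide)
      (c 6) (by
        simp only [Bool.and_eq_true]
        refine ⟨⟨⟨⟨⟨A _ _ ?_, N _ _ ?_ ?_⟩, N _ _ ?_ ?_⟩, N _ _ ?_ ?_⟩, N _ _ ?_ ?_⟩,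
          N _ _ ?_ ?_⟩ <;> decide)
      (c 7) (by
        simp only [Bool.and_eq_true]
        refine ⟨⟨⟨⟨⟨⟨A _ _ ?_, A _ _ ?_⟩, N _ _ ?_ ?_⟩, N _ _ ?_ ?_⟩, N _ _ ?_ ?_⟩, N _ _ ?_ ?_⟩,
          N _ _ ?_ ?_⟩ <;> decide)
    obtain ⟨g, hg1, hg2, hg3⟩ : ∃ g : Fin 8 → Fin 8, (∀ i, c (g i) = i) ∧ (∀ j, g (c j) = j) ∧
        ∀ i, (SimpleGraph.cycleGraph 8).Adj (g i) (g (i + 1)) := by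
      simp only [adj]
      rcases K with ⟨h1, h2, h3, h4, h5, h6, h7⟩ | ⟨h1, h2, h3, h4, h5, h6, h7⟩
      · have hj : ∀ j, c j = c 0 + j := by
          intro j
          fin_cases j
          · simp
          all_goals assumption
        refine ⟨fun i => i - c 0, fun i => ?_, fun j => ?_, fun i => ?_⟩
        · rw [hj]; simp
        · show c j - c 0 = j
          rw [hj j]; simp
        · right
          show i + 1 - c 0 - (i - c 0) = 1
          generalize c 0 = z
          revert i z; decide
      · have hj : ∀ j, c j = c 0 - j := by
          intro j
          fin_cases j
          · simp
          all_goals assumption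
        refine ⟨fun i => c 0 - i, fun i => ?_, fun j => ?_, fun i => ?_⟩
        · rw [hj]; simp
        · show c 0 - c j = j
          rw [hj j]; simp
        · left
          show c 0 - i - (c 0 - (i + 1)) = 1
          generalize c 0 = z
          revert i z; decide
    have hX : ∀ i, f (g i) ∈ X i := fun i => by
      have := hc (g i)
      rwa [hg1] at this
    refine ⟨fun i => ⟨f (g i), ⟨⟨_, rfl⟩, hX i⟩, ?_⟩, fun i => f (g i), ?_, hX,
      fun i => f.map_adj_iff.2 (hg3 i)⟩
    · rintro v ⟨⟨j, rfl⟩, hv⟩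
      have : c j = i := by
        by_contra hne
        exact Set.disjoint_left.1 (hdisj _ _ hne) (hc j) hv
      rw [← this, hg2]
    · ext v
      constructor
      · rintro ⟨i, rfl⟩
        exact ⟨_, rfl⟩
      · rintro ⟨j, rfl⟩
        exact ⟨c j, by simp only [hg2]⟩
  · refine ⟨fun f => ?_⟩
    choose c hc using fun i => hcover (f i)
    have A : ∀ i j : Fin 7, Mgraph.Adj i j → okA (c i) (c j) = true :=
      fun i j h => hA _ _ _ _ (hc i) (hc j) (f.map_adj_iff.2 h)
    have N : ∀ i j : Fin 7, i ≠ j → ¬ Mgraph.Adj i j → okN (c i) (c j) = true :=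
      fun i j hij h => hN _ _ _ _ (hc i) (hc j) (fun e => hij (f.injective e))
        (fun e => h (f.map_adj_iff.1 e))
    exact key_M (c 6) (c 0) (A _ _ (by simp [Mgraph]))
      (c 1) (by
        simp only [Bool.and_eq_true]
        refine ⟨A _ _ ?_, N _ _ ?_ ?_⟩ <;> simp [Mgraph])
      (c 2) (by
        simp only [Bool.and_eq_true]
        refine ⟨⟨A _ _ ?_, A _ _ ?_⟩, A _ _ ?_⟩ <;> simp [Mgraph])
      (c 3) (by
        simp only [Bool.and_eq_true]
        refine ⟨⟨⟨A _ _ ?_, A _ _ ?_⟩, A _ _ ?_⟩, N _ _ ?_ ?_⟩ <;> simp [Mgraph])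
      (c 4) (by
        simp only [Bool.and_eq_true]
        refine ⟨⟨⟨⟨A _ _ ?_, A _ _ ?_⟩, A _ _ ?_⟩, A _ _ ?_⟩, A _ _ ?_⟩ <;> simp [Mgraph])
      (c 5) (by
        simp only [Bool.and_eq_true]
        refine ⟨⟨⟨⟨⟨A _ _ ?_, A _ _ ?_⟩, A _ _ ?_⟩, A _ _ ?_⟩, A _ _ ?_⟩, N _ _ ?_ ?_⟩ <;>
          simp [Mgraph])

end
end

section
/- For every integer h ≥ 3 there exist ε₀ = ε₀(h) > 0 and c = c(h) > 0 such that the following holds for every ε ∈ (0, ε₀) and every non-bipartite graph H on h vertices: letting K be the core of H and k = |V(K)|, there is n₀ = n₀(ε) such that for every n ≥ n₀ there exists a graph G on n vertices satisfying: (1) there is a homomorphism from G to K; (2) G is ε-far from being induced H-free; (3) G contains at most ε^{c·log(1/ε)}·n^k (not necessarily induced) copies of K. -/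
open scoped Classical
open Finset

noncomputable section

/-- `X` induces a core of `G`: there is a homomorphism from `G` to the induced subgraph
`G[X]`, and `X` has minimum cardinality among all vertex sets with this property. -/
def IsCoreOf {V : Type*} (G : SimpleGraph V) (X : Set V) : Prop :=
  Nonempty (G →g G.induce X) ∧
  ∀ Y : Set V, Nonempty (G →g G.induce Y) → X.ncard ≤ Y.ncard


def ConvSet (A : ℕ) (S : Finset ℕ) : Prop :=
  ∀ (t : ℕ) (c s : ℕ → ℕ) (s0 : ℕ), (∀ j < t, 0 < c j) → (∀ j < t, s j ∈ S) → s0 ∈ S →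
    ∑ j ∈ range t, c j ≤ A → ∑ j ∈ range t, c j * s j = (∑ j ∈ range t, c j) * s0 →
    ∀ j < t, s j = s0

lemma map_lt_pow (B : ℕ) : ∀ (D : ℕ) (x : Fin D → ℕ), (∀ i, x i < B) → Behrend.map B x < B ^ D := by
  intro D
  induction D with
  | zero => intro x _; simp
  | succ D ih =>
    intro x hx
    rw [Behrend.map_succ']
    have h1 := ih (x ∘ Fin.succ) (fun i => hx _)
    have h0 := hx 0
    rw [pow_succ]
    nlinarith

lemma conv_vec {D : ℕ} (t : ℕ) (c : ℕ → ℕ) (v : ℕ → Fin D → ℕ) (w : Fin D → ℕ) (k : ℕ)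
    (hc : ∀ j < t, 0 < c j) (hv : ∀ j < t, ∑ i, v j i ^ 2 = k) (hw : ∑ i, w i ^ 2 = k)
    (hs : ∀ i, ∑ j ∈ range t, c j * v j i = (∑ j ∈ range t, c j) * w i) :
    ∀ j < t, v j = w := by
  have key : ∑ j ∈ range t, (c j : ℤ) * ∑ i, ((v j i : ℤ) - w i) ^ 2 = 0 := by
    have e1 : ∀ j ∈ range t, (c j : ℤ) * ∑ i, ((v j i : ℤ) - w i) ^ 2
        = (c j : ℤ) * (2 * k) - 2 * ∑ i, (c j * v j i : ℤ) * w i := by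
      intro j hj
      have h1 : ∑ i, (v j i : ℤ) ^ 2 = k := by exact_mod_cast hv j (mem_range.1 hj)
      have h2 : ∑ i, (w i : ℤ) ^ 2 = k := by exact_mod_cast hw
      have h3 : ∑ i, ((v j i : ℤ) - w i) ^ 2
          = ∑ i, (v j i : ℤ) ^ 2 + ∑ i, (w i : ℤ) ^ 2 - 2 * ∑ i, (v j i : ℤ) * w i := by
        rw [Finset.mul_sum, ← Finset.sum_add_distrib, ← Finset.sum_sub_distrib]
        exact Finset.sum_congr rfl fun i _ => by ring
      have h4 : ∑ i, (c j * v j i : ℤ) * w i = c j * ∑ i, (v j i : ℤ) * w i := by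
        rw [Finset.mul_sum]; exact Finset.sum_congr rfl fun i _ => by ring
      rw [h3, h1, h2, h4]; ring
    rw [Finset.sum_congr rfl e1, Finset.sum_sub_distrib, ← Finset.sum_mul, ← Finset.mul_sum,
      Finset.sum_comm]
    have h2 : ∑ i, (w i : ℤ) ^ 2 = k := by exact_mod_cast hw
    have e2 : ∀ i ∈ (univ : Finset (Fin D)), ∑ j ∈ range t, (c j * v j i : ℤ) * w i
        = (∑ j ∈ range t, (c j : ℤ)) * (w i : ℤ) ^ 2 := by
      intro i _
      rw [← Finset.sum_mul]
      have := hs i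
      have h5 : ∑ j ∈ range t, (c j * v j i : ℤ) = (∑ j ∈ range t, (c j : ℤ)) * w i := by
        exact_mod_cast this
      rw [h5]; ring
    rw [Finset.sum_congr rfl e2, ← Finset.mul_sum, h2]; ring
  intro j hj
  have h0 := (Finset.sum_eq_zero_iff_of_nonneg (fun j _ => by positivity)).1 key j (mem_range.2 hj)
  have hcj : (c j : ℤ) ≠ 0 := by have := hc j hj; positivity
  have h1 := (mul_eq_zero.1 h0).resolve_left hcj
  ext i
  have h2 := (Finset.sum_eq_zero_iff_of_nonneg (fun i _ => by positivity)).1 h1 i (mem_univ _)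
  have h3 := pow_eq_zero_iff (two_ne_zero) |>.1 h2
  omega

lemma behrend_conv (A d D : ℕ) (hA : 0 < A) :
    ∃ S : Finset ℕ, (∀ s ∈ S, s < (A * d) ^ D) ∧
      (((d : ℝ) ^ D) / (D * d ^ 2) ≤ #S) ∧ ConvSet A S := by
  obtain ⟨k, hk⟩ := Behrend.exists_large_sphere D d
  have hbox : ∀ x ∈ Behrend.sphere D d k, ∀ i, x i < d := fun x hx =>
    Behrend.mem_box.1 (Behrend.sphere_subset_box hx)
  have hbox' : ∀ x ∈ Behrend.sphere D d k, ∀ i, x i < A * d := fun x hx i =>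
    lt_of_lt_of_le (hbox x hx i) (Nat.le_mul_of_pos_left _ hA)
  refine ⟨(Behrend.sphere D d k).image (Behrend.map (A * d)), ?_, ?_, ?_⟩
  · intro s hs
    obtain ⟨x, hx, rfl⟩ := mem_image.1 hs
    exact map_lt_pow _ _ _ (hbox' x hx)
  · rw [card_image_of_injOn]
    · convert hk using 1; push_cast; rfl
    · exact Behrend.map_injOn.mono fun x hx => hbox' x hx
  · intro t c s s0 hc hs hs0 hsum heq
    obtain ⟨w, hw, rfl⟩ := mem_image.1 hs0
    have hs' : ∀ j, ∃ v, j < t → v ∈ Behrend.sphere D d k ∧ Behrend.map (A * d) v = s j := by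
      intro j
      by_cases hj : j < t
      · obtain ⟨v, hv, h⟩ := mem_image.1 (hs j hj)
        exact ⟨v, fun _ => ⟨hv, h⟩⟩
      · exact ⟨0, fun h => absurd h hj⟩
    choose v hv using hs'
    rcases Nat.eq_zero_or_pos t with rfl | ht
    · intro j hj; omega
    have hcpos : 0 < ∑ j ∈ range t, c j :=
      Finset.sum_pos (fun j hj => hc j (mem_range.1 hj)) ⟨0, mem_range.2 ht⟩
    have hvec : (∑ j ∈ range t, c j • v j) = (∑ j ∈ range t, c j) • w := by
      apply Behrend.map_injOn (d := A * d)
      · intro i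
        have : ∑ j ∈ range t, c j * v j i < ∑ j ∈ range t, c j * d := by
          apply Finset.sum_lt_sum_of_nonempty ⟨0, mem_range.2 ht⟩
          intro j hj
          exact Nat.mul_lt_mul_of_pos_left (hbox _ (hv j (mem_range.1 hj)).1 i) (hc j (mem_range.1 hj))
        rw [← Finset.sum_mul] at this
        simp only [Finset.sum_apply, Pi.smul_apply, smul_eq_mul]
        exact this.trans_le (Nat.mul_le_mul_right _ hsum)
      · intro i
        simp only [Pi.smul_apply, smul_eq_mul]
        exact (Nat.mul_lt_mul_of_pos_left (hbox _ hw i) hcpos).trans_le (Nat.mul_le_mul_right _ hsum)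
      · rw [map_sum, map_nsmul, smul_eq_mul, ← heq]
        refine Finset.sum_congr rfl fun j hj => ?_
        rw [map_nsmul, (hv j (mem_range.1 hj)).2, smul_eq_mul]
    intro j hj
    rw [← (hv j hj).2]
    congr 1
    refine conv_vec t c v w k hc (fun j hj => (mem_filter.1 (hv j hj).1).2) (mem_filter.1 hw).2 ?_ j hj
    intro i
    have := congrFun hvec i
    simpa [Finset.sum_apply] using this

lemma params (A : ℕ) (hA : 2 ≤ A) (C : ℝ) (hC : 1 ≤ C) :
    ∃ ε₀ c : ℝ, 0 < ε₀ ∧ 0 < c ∧ ∀ ε : ℝ, 0 < ε → ε < ε₀ →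
      ∃ (m : ℕ) (S : Finset ℕ), 0 < m ∧ (∀ s ∈ S, s < m) ∧ ConvSet A S ∧
        C * ε * m ≤ #S ∧ 2 / (m : ℝ) ≤ ε ^ (c * Real.log (1 / ε)) := by
  have hA' : (2 : ℝ) ≤ A := by exact_mod_cast hA
  set a := Real.log A with ha
  have ha0 : 0 < a := Real.log_pos (by linarith)
  set L₀ := 4 * Real.log C + 128 * a + 1 with hL₀
  have hlC : 0 ≤ Real.log C := Real.log_nonneg hC
  refine ⟨Real.exp (-L₀), 1 / (128 * a), Real.exp_pos _, by positivity, ?_⟩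
  intro ε hε hε0
  obtain ⟨L, rfl⟩ : ∃ L, ε = Real.exp (-L) := ⟨-Real.log ε, by rw [neg_neg, Real.exp_log hε]⟩
  have hL : L₀ < L := by have := Real.exp_lt_exp.1 hε0; linarith
  have hL1 : 1 < L := by nlinarith
  set D := ⌊L / (4 * a)⌋₊ with hD
  set d := ⌊Real.exp (L / 8)⌋₊ with hd
  have hDle : (D : ℝ) ≤ L / (4 * a) := Nat.floor_le (by positivity)
  have hDgt : L / (4 * a) < D + 1 := Nat.lt_floor_add_one _
  have hdle : (d : ℝ) ≤ Real.exp (L / 8) := Nat.floor_le (by positivity)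
  have hdgt : Real.exp (L / 8) < d + 1 := Nat.lt_floor_add_one _
  have hx1 : 1 ≤ L / (4 * a) := by
    rw [le_div_iff₀ (by positivity)]; linarith
  have hD1 : 1 ≤ D := Nat.one_le_floor_iff _ |>.2 hx1
  have hd1 : 1 ≤ d := Nat.one_le_floor_iff _ |>.2 (Real.one_le_exp (by linarith))
  have hD1' : (1 : ℝ) ≤ D := by exact_mod_cast hD1
  have hd1' : (1 : ℝ) ≤ d := by exact_mod_cast hd1
  obtain ⟨S, hSlt, hScard, hSconv⟩ := behrend_conv A d D (by omega)
  refine ⟨(A * d) ^ D, S, by positivity, hSlt, hSconv, ?_, ?_⟩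
  · refine le_trans ?_ hScard
    rw [le_div_iff₀ (by positivity)]
    push_cast
    have hAexp : (A : ℝ) = Real.exp a := by rw [ha, Real.exp_log (by linarith)]
    have hAD : (A : ℝ) ^ D ≤ Real.exp (L / 4) := by
      rw [hAexp, ← Real.exp_nat_mul]
      apply Real.exp_le_exp.2
      rw [le_div_iff₀ (by positivity)] at hDle
      linarith
    have hDD : (D : ℝ) ≤ Real.exp (L / 4) := by
      refine le_trans ?_ hAD
      have : D ≤ A ^ D := (Nat.lt_pow_self (by omega)).le
      exact_mod_cast this
    have hdd : (d : ℝ) ^ 2 ≤ Real.exp (L / 4) := by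
      have : Real.exp (L / 4) = Real.exp (L / 8) ^ 2 := by
        rw [← Real.exp_nat_mul]; congr 1; push_cast; ring
      rw [this]; gcongr
    have hCC : C ≤ Real.exp (L / 4) := by
      rw [← Real.exp_log (by linarith : 0 < C)]
      apply Real.exp_le_exp.2
      linarith
    have hE : Real.exp (-L) * Real.exp (L / 4) ^ 4 = 1 := by
      rw [← Real.exp_nat_mul, ← Real.exp_add]; push_cast; ring_nf; simp
    have : C * ((A:ℝ) ^ D * (D * d ^ 2)) ≤ Real.exp (L/4) * (Real.exp (L/4) * (Real.exp (L/4) * Real.exp (L/4))) := by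
      gcongr
    calc C * Real.exp (-L) * (A * d : ℝ) ^ D * (D * d ^ 2)
        = d ^ D * (Real.exp (-L) * (C * ((A:ℝ) ^ D * (D * d ^ 2)))) := by rw [mul_pow]; ring
      _ ≤ d ^ D * (Real.exp (-L) * (Real.exp (L/4) * (Real.exp (L/4) * (Real.exp (L/4) * Real.exp (L/4))))) := by gcongr
      _ = d ^ D * (Real.exp (-L) * Real.exp (L / 4) ^ 4) := by ring
      _ = d ^ D := by rw [hE, mul_one]
  · have h1 : Real.exp (L / 8) ≤ A * d := by nlinarith
    have h2 : Real.exp (L ^ 2 / (64 * a)) ≤ (A * d : ℝ) ^ D := by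
      calc Real.exp (L ^ 2 / (64 * a)) ≤ Real.exp (D * (L / 8)) := by
            apply Real.exp_le_exp.2
            have : L / (8 * a) ≤ D := by
              have : L / (8 * a) = L / (4 * a) / 2 := by field_simp; norm_num
              linarith
            calc L ^ 2 / (64 * a) = L / (8 * a) * (L / 8) := by field_simp; norm_num
              _ ≤ _ := by gcongr
        _ = Real.exp (L / 8) ^ D := by rw [← Real.exp_nat_mul]
        _ ≤ _ := by gcongr
    push_cast
    rw [div_le_iff₀ (by positivity)]
    have h3 : Real.exp (-L) ^ (1 / (128 * a) * Real.log (1 / Real.exp (-L)))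
        = Real.exp (-(L ^ 2 / (128 * a))) := by
      rw [Real.rpow_def_of_pos (Real.exp_pos _), one_div (Real.exp (-L)), Real.log_inv, Real.log_exp]
      congr 1; ring
    rw [h3]
    have h4 : (2 : ℝ) ≤ Real.exp (L ^ 2 / (128 * a)) := by
      have : 1 ≤ L ^ 2 / (128 * a) := by
        rw [le_div_iff₀ (by positivity)]; nlinarith
      have := Real.add_one_le_exp (L ^ 2 / (128 * a))
      linarith
    calc (2 : ℝ) ≤ Real.exp (L ^ 2 / (128 * a)) := h4
      _ = Real.exp (-(L ^ 2 / (128 * a))) * Real.exp (L ^ 2 / (64 * a)) := by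
          rw [← Real.exp_add]; congr 1; field_simp; ring
      _ ≤ _ := by gcongr

lemma exists_cycle_fun {V : Type*} (K : SimpleGraph V) (hK : ¬ K.IsBipartite) :
    ∃ (r : ℕ) (c : ℕ → V), 3 ≤ r ∧ (∀ i < r, ∀ j < r, c i = c j → i = j) ∧
      (∀ i, i + 1 < r → K.Adj (c i) (c (i + 1))) ∧ K.Adj (c 0) (c (r - 1)) := by
  have h1 : ¬ K.IsAcyclic := fun h => hK h.isBipartite
  unfold SimpleGraph.IsAcyclic at h1
  push Not at h1
  obtain ⟨v, w, hw⟩ := h1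
  have h3 := hw.isCircuit.three_le_length
  refine ⟨w.length, w.getVert, h3, ?_, ?_, ?_⟩
  · intro i hi j hj hij
    exact hw.getVert_injOn' (by simp; omega) (by simp; omega) hij
  · intro i hi
    exact w.adj_getVert_succ (by omega)
  · have := w.adj_getVert_succ (i := w.length - 1) (by omega)
    rw [show w.length - 1 + 1 = w.length by omega, w.getVert_length] at this
    rw [w.getVert_zero]
    exact this.symm

def prt {h : ℕ} (hh : 0 < h) {n : ℕ} (i : Fin n) : Fin h := ⟨i % h, Nat.mod_lt _ hh⟩

def pos (h M : ℕ) {n : ℕ} (i : Fin n) : ℕ := ((i : ℕ) / h) % M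

def gph {h : ℕ} (hh : 0 < h) (H : SimpleGraph (Fin h)) (a : Fin h → ℕ) (S : Finset ℕ) (M n : ℕ) :
    SimpleGraph (Fin n) where
  Adj i j := H.Adj (prt hh i) (prt hh j) ∧ ∃ x : ℕ, ∃ s ∈ S,
    pos h M i = x + a (prt hh i) * s ∧ pos h M j = x + a (prt hh j) * s
  symm := ⟨fun _ _ ⟨h1, x, s, hs, h2, h3⟩ => ⟨h1.symm, x, s, hs, h3, h2⟩⟩
  loopless := ⟨fun _ ⟨h1, _⟩ => H.loopless.irrefl _ h1⟩

lemma far_count {h : ℕ} (hh : 0 < h) (H : SimpleGraph (Fin h)) (a : Fin h → ℕ)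
    (ha : Function.Injective a) (A : ℕ) (haA : ∀ u, a u ≤ A) (S : Finset ℕ) (m M n b : ℕ)
    (hm : 0 < m) (hS : ∀ s ∈ S, s < m) (hM : M = (1 + A) * m) (hn : h * ((1 + A) * (M * b)) ≤ n)
    (G' : SimpleGraph (Fin n)) (hG' : IsEmpty (H ↪g G')) :
    m * #S * b ^ 2 ≤ editDist (gph hh H a S M n) G' := by
  set G := gph hh H a S M n with hG
  have hmM : m ≤ M := by rw [hM]; nlinarith
  set T : Finset ((ℕ × ℕ) × (ℕ × ℕ)) := (range m ×ˢ range b) ×ˢ (S ×ˢ range b) with hT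
  have hTcard : #T = m * #S * b ^ 2 := by simp [hT]; ring
  let P : ((ℕ × ℕ) × (ℕ × ℕ)) → Fin h → ℕ := fun τ u =>
    (τ.1.1 + M * τ.1.2) + a u * (τ.2.1 + M * τ.2.2)
  have hmem : ∀ τ ∈ T, τ.1.1 < m ∧ τ.1.2 < b ∧ τ.2.1 ∈ S ∧ τ.2.2 < b := by
    intro τ hτ
    simp only [hT, mem_product, mem_range] at hτ
    tauto
  have hlt : ∀ τ ∈ T, ∀ u : Fin h, (u : ℕ) + h * P τ u < n := by
    intro τ hτ u
    obtain ⟨h1, h2, h3, h4⟩ := hmem τ hτ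
    have h5 := hS _ h3
    have e1 : τ.1.1 + M * τ.1.2 < M * b := by nlinarith
    have e2 : τ.2.1 + M * τ.2.2 ≤ M * b := by nlinarith
    have e3 : P τ u < (1 + A) * (M * b) := by
      have : a u * (τ.2.1 + M * τ.2.2) ≤ A * (M * b) := Nat.mul_le_mul (haA u) e2
      simp only [P]; nlinarith
    have := u.2
    nlinarith
  have hkey : ∀ τ ∈ T, ∃ e : Sym2 (Fin n), ((e ∈ G.edgeSet ∧ e ∉ G'.edgeSet) ∨
      (e ∉ G.edgeSet ∧ e ∈ G'.edgeSet)) ∧ ∃ (u v : Fin h) (hu : (u : ℕ) + h * P τ u < n)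
      (hv : (v : ℕ) + h * P τ v < n), u ≠ v ∧
        e = s(⟨(u : ℕ) + h * P τ u, hu⟩, ⟨(v : ℕ) + h * P τ v, hv⟩) := by
    intro τ hτ
    obtain ⟨h1, h2, h3, h4⟩ := hmem τ hτ
    have h5 := hS _ h3
    let E : Fin h → Fin n := fun u => ⟨(u : ℕ) + h * P τ u, hlt τ hτ u⟩
    have hprt : ∀ u, prt hh (E u) = u := by
      intro u; ext; simp [prt, E, Nat.mod_eq_of_lt u.2]
    have hEinj : Function.Injective E := fun u v huv => by rw [← hprt u, ← hprt v, huv]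
    have hpos : ∀ u, pos h M (E u) = τ.1.1 + a u * τ.2.1 := by
      intro u
      have e1 : ((u : ℕ) + h * P τ u) / h = P τ u := by
        rw [Nat.add_mul_div_left _ _ hh, Nat.div_eq_of_lt u.2, zero_add]
      have e2 : P τ u = (τ.1.1 + a u * τ.2.1) + M * (τ.1.2 + a u * τ.2.2) := by simp only [P]; ring
      have e3 : τ.1.1 + a u * τ.2.1 < M := by
        have : a u * τ.2.1 ≤ A * m := Nat.mul_le_mul (haA u) h5.le
        rw [hM]; nlinarith
      simp only [pos, E]
      rw [e1, e2, Nat.add_mul_mod_self_left, Nat.mod_eq_of_lt e3]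
    have hadj : ∀ u v, G.Adj (E u) (E v) ↔ H.Adj u v := by
      intro u v
      constructor
      · rintro ⟨h, -⟩
        rwa [hprt, hprt] at h
      · intro h
        refine ⟨by rwa [hprt, hprt], τ.1.1, τ.2.1, h3, ?_, ?_⟩
        · rw [hpos, hprt]
        · rw [hpos, hprt]
    by_contra hcon
    push Not at hcon
    refine hG'.elim ⟨⟨E, hEinj⟩, ?_⟩
    intro u v
    change G'.Adj (E u) (E v) ↔ H.Adj u v
    rcases eq_or_ne u v with rfl | huv
    · simp
    have := hcon s(E u, E v)
    rw [← hadj]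
    by_contra hne
    refine this ?_ u v (hlt τ hτ u) (hlt τ hτ v) huv rfl
    simp only [SimpleGraph.mem_edgeSet]
    tauto
  rcases T.eq_empty_or_nonempty with hTe | ⟨τ0, hτ0⟩
  · rw [← hTcard, hTe]; simp
  have : Nonempty (Sym2 (Fin n)) := ⟨(hkey τ0 hτ0).choose⟩
  choose! e he using hkey
  rw [← hTcard, editDist, ← Set.ncard_coe_finset]
  refine Set.ncard_le_ncard_of_injOn e (fun τ hτ => (he τ hτ).1) ?_ (Set.toFinite _)
  intro τ hτ τ' hτ' hee
  obtain ⟨-, u, v, hu, hv, huv, e1⟩ := he τ hτ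
  obtain ⟨-, u', v', hu', hv', huv', e2⟩ := he τ' hτ'
  have hdec : ∀ (u u' : Fin h) (p p' : ℕ), (u : ℕ) + h * p = u' + h * p' → u = u' ∧ p = p' := by
    intro u u' p p' hp
    have h1 := congrArg (· % h) hp
    simp only [Nat.add_mul_mod_self_left, Nat.mod_eq_of_lt u.2, Nat.mod_eq_of_lt u'.2] at h1
    refine ⟨Fin.ext h1, ?_⟩
    rw [h1] at hp
    exact Nat.eq_of_mul_eq_mul_left hh (by omega)
  have hfin : ∃ u v : Fin h, u ≠ v ∧ P τ u = P τ' u ∧ P τ v = P τ' v := by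
    rw [e1, e2, Sym2.eq_iff] at hee
    rcases hee with ⟨h1, h2⟩ | ⟨h1, h2⟩
    · obtain ⟨rfl, h3⟩ := hdec _ _ _ _ (congrArg Fin.val h1)
      obtain ⟨rfl, h4⟩ := hdec _ _ _ _ (congrArg Fin.val h2)
      exact ⟨u, v, huv, h3, h4⟩
    · obtain ⟨rfl, h3⟩ := hdec _ _ _ _ (congrArg Fin.val h1)
      obtain ⟨rfl, h4⟩ := hdec _ _ _ _ (congrArg Fin.val h2)
      exact ⟨u, v, huv, h3, h4⟩
  obtain ⟨u, v, huv, h1, h2⟩ := hfin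
  obtain ⟨⟨x, y⟩, ⟨s, z⟩⟩ := τ
  obtain ⟨⟨x', y'⟩, ⟨s', z'⟩⟩ := τ'
  simp only [P] at h1 h2
  obtain ⟨g1, g2, g3, g4⟩ := hmem _ hτ
  obtain ⟨g1', g2', g3', g4'⟩ := hmem _ hτ'
  have g5 := hS _ g3
  have g5' := hS _ g3'
  simp only at g1 g1' g5 g5'
  have hauv : (a u : ℤ) - a v ≠ 0 := by
    have : a u ≠ a v := fun h => huv (ha h)
    omega
  have hTT : s + M * z = s' + M * z' := by
    have h3 : ((a u : ℤ) - a v) * ((s + M * z : ℕ) : ℤ) = (a u - a v) * ((s' + M * z' : ℕ) : ℤ) := by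
      have h1' : ((x + M * y + a u * (s + M * z) : ℕ) : ℤ) = ((x' + M * y' + a u * (s' + M * z') : ℕ) : ℤ) := by rw [h1]
      have h2' : ((x + M * y + a v * (s + M * z) : ℕ) : ℤ) = ((x' + M * y' + a v * (s' + M * z') : ℕ) : ℤ) := by rw [h2]
      push_cast at h1' h2' ⊢
      linarith
    exact_mod_cast mul_left_cancel₀ hauv h3
  have hXX : x + M * y = x' + M * y' := by rw [hTT] at h1; omega
  have hMp : 0 < M := by omega
  have hdec2 : ∀ p q p' q' : ℕ, p < m → p' < m → p + M * q = p' + M * q' → p = p' ∧ q = q' := by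
    intro p q p' q' hp hp' hpq
    have h1 := congrArg (· % M) hpq
    simp only [Nat.add_mul_mod_self_left, Nat.mod_eq_of_lt (hp.trans_le hmM),
      Nat.mod_eq_of_lt (hp'.trans_le hmM)] at h1
    refine ⟨h1, Nat.eq_of_mul_eq_mul_left hMp (by omega)⟩
  obtain ⟨rfl, rfl⟩ := hdec2 _ _ _ _ g1 g1' hXX
  obtain ⟨rfl, rfl⟩ := hdec2 _ _ _ _ g5 g5' hTT
  rfl

lemma inv_adj {V : Type*} [Finite V] (K : SimpleGraph V) (σ : Equiv.Perm V)
    (hσ : ∀ u v, K.Adj u v → K.Adj (σ u) (σ v)) (u v : V) (huv : K.Adj u v) :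
    K.Adj (σ⁻¹ u) (σ⁻¹ v) := by
  have hp : ∀ j : ℕ, ∀ u v, K.Adj u v → K.Adj ((σ ^ j) u) ((σ ^ j) v) := by
    intro j
    induction j with
    | zero => intro u v h; simpa using h
    | succ j ih =>
      intro u v h
      rw [pow_succ']
      exact hσ _ _ (ih _ _ h)
  have h0 : 0 < orderOf σ := orderOf_pos σ
  have h1 : σ⁻¹ = σ ^ (orderOf σ - 1) := by
    rw [inv_eq_iff_mul_eq_one, ← pow_succ', Nat.sub_add_cancel h0, pow_orderOf_eq_one]
  rw [h1]
  exact hp _ _ _ huv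

lemma cycle_conv {A : ℕ} {S : Finset ℕ} (hS : ConvSet A S) (r : ℕ) (hr : 3 ≤ r)
    (α q : ℕ → ℕ) (hα : ∀ i, i + 1 < r → α i < α (i + 1)) (hA : α (r - 1) ≤ A)
    (s : ℕ → ℕ) (s0 : ℕ) (hs : ∀ i, i + 1 < r → s i ∈ S) (hs0 : s0 ∈ S)
    (hq : ∀ i, i + 1 < r → q (i + 1) = q i + (α (i + 1) - α i) * s i)
    (hq0 : (q (r - 1) : ℤ) = q 0 + ((α (r - 1) : ℤ) - α 0) * s0) :
    s 0 = s 1 := by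
  have hsum : ∀ t, t < r → α t = α 0 + ∑ j ∈ range t, (α (j + 1) - α j) := by
    intro t
    induction t with
    | zero => simp
    | succ t ih =>
      intro ht
      rw [Finset.sum_range_succ, ← add_assoc, ← ih (by omega)]
      have := hα t ht
      omega
  have hsum2 : ∀ t, t < r → q t = q 0 + ∑ j ∈ range t, (α (j + 1) - α j) * s j := by
    intro t
    induction t with
    | zero => simp
    | succ t ih =>
      intro ht
      rw [Finset.sum_range_succ, ← add_assoc, ← ih (by omega), hq t ht]
  have h1 := hsum (r - 1) (by omega)
  have h2 := hsum2 (r - 1) (by omega)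
  have := hS (r - 1) (fun j => α (j + 1) - α j) s s0
    (fun j hj => by have := hα j (by omega); omega) (fun j hj => hs j (by omega)) hs0
    (by omega) (by
      rw [h1, h2] at hq0
      push_cast at hq0
      zify
      linarith)
  rw [this 0 (by omega), this 1 (by omega)]


lemma copies_count {h : ℕ} (hh : 0 < h) (H : SimpleGraph (Fin h)) {V : Type*} [Fintype V]
    (K : SimpleGraph V) (φ : H →g K) (hcore : ∀ σ : K →g K, Function.Surjective σ)
    (a : Fin h → ℕ) (A : ℕ) (haA : ∀ u, a u ≤ A) (S : Finset ℕ) (hS : ConvSet A S) (M n : ℕ)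
    (r : ℕ) (c : ℕ → V) (hr : 3 ≤ r) (hc : ∀ i < r, ∀ j < r, c i = c j → i = j)
    (hadj : ∀ i, i + 1 < r → K.Adj (c i) (c (i + 1))) (hadj0 : K.Adj (c 0) (c (r - 1)))
    (hord : ∀ u v i, i + 1 < r → φ u = c i → φ v = c (i + 1) → a u < a v) :
    Set.ncard {K' : (gph hh H a S M n).Subgraph | Nonempty (K ≃g K'.coe)}
      ≤ n ^ (Fintype.card V - 1) * (h * (n / h / M + 1)) := by
  set G := gph hh H a S M n with hG
  let F : Set (V → Fin n) :=
    {f | (∀ u v, K.Adj u v → G.Adj (f u) (f v)) ∧ ∀ v, φ (prt hh (f v)) = v}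
  have step1 : ∀ K' : G.Subgraph, Nonempty (K ≃g K'.coe) → ∃ f : V → Fin n, f ∈ F ∧
      K'.verts = Set.range f ∧
      ∀ x y, K'.Adj x y ↔ ∃ u v, K.Adj u v ∧ f u = x ∧ f v = y := by
    rintro K' ⟨e⟩
    let g : V → Fin n := fun v => (e v : Fin n)
    have hg : ∀ u v, K.Adj u v ↔ K'.Adj (g u) (g v) := by
      intro u v
      rw [← e.map_adj_iff]
      rfl
    have hgG : ∀ u v, K.Adj u v → G.Adj (g u) (g v) := fun u v huv => ((hg u v).1 huv).adj_sub
    let σ : K →g K := ⟨fun v => φ (prt hh (g v)), fun {u v} huv => φ.map_adj (hgG u v huv).1⟩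
    have hσ := hcore σ
    let τ : Equiv.Perm V := Equiv.ofBijective σ ⟨Finite.injective_iff_surjective.2 hσ, hσ⟩
    have hτ : ∀ v, τ v = φ (prt hh (g v)) := fun v => rfl
    have hinv : ∀ u v, K.Adj u v → K.Adj (τ⁻¹ u) (τ⁻¹ v) :=
      inv_adj K τ (fun u v huv => σ.map_adj huv)
    refine ⟨fun v => g (τ⁻¹ v), ⟨fun u v huv => hgG _ _ (hinv _ _ huv), fun v => ?_⟩, ?_, ?_⟩
    · rw [← hτ]; simp
    · ext x
      constructor
      · intro hx
        refine ⟨τ (e.symm ⟨x, hx⟩), ?_⟩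
        simp [g]
      · rintro ⟨v, rfl⟩
        exact (e _).2
    · intro x y
      constructor
      · intro hxy
        have hx := K'.edge_vert hxy
        have hy := K'.edge_vert hxy.symm
        refine ⟨τ (e.symm ⟨x, hx⟩), τ (e.symm ⟨y, hy⟩), ?_, by simp [g], by simp [g]⟩
        apply σ.map_adj
        rw [e.symm.map_adj_iff]
        exact hxy
      · rintro ⟨u, v, huv, rfl, rfl⟩
        exact (hg _ _).1 (hinv _ _ huv)
  have step2 : Set.ncard {K' : G.Subgraph | Nonempty (K ≃g K'.coe)} ≤ F.ncard := by
    rcases Set.eq_empty_or_nonempty {K' : G.Subgraph | Nonempty (K ≃g K'.coe)} with h0 | ⟨K0, hK0⟩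
    · rw [h0]; simp
    have : Nonempty (V → Fin n) := ⟨(step1 K0 hK0).choose⟩
    choose! f hf using step1
    refine Set.ncard_le_ncard_of_injOn f (fun K' hK' => (hf K' hK').1) ?_ (Set.toFinite _)
    intro K1 h1 K2 h2 h12
    obtain ⟨-, v1, a1⟩ := hf K1 h1
    obtain ⟨-, v2, a2⟩ := hf K2 h2
    ext x y
    · rw [v1, v2, h12]
    · rw [a1, a2, h12]
  have step3 : ∀ f ∈ F, ∃ s : ℕ,
      a (prt hh (f (c 0))) < a (prt hh (f (c 1))) ∧
      pos h M (f (c 1)) = pos h M (f (c 0)) + (a (prt hh (f (c 1))) - a (prt hh (f (c 0)))) * s ∧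
      pos h M (f (c 2)) = pos h M (f (c 1)) + (a (prt hh (f (c 2))) - a (prt hh (f (c 1)))) * s := by
    rintro f ⟨hf1, hf2⟩
    have hα : ∀ i, i + 1 < r → a (prt hh (f (c i))) < a (prt hh (f (c (i + 1)))) :=
      fun i hi => hord _ _ i hi (hf2 _) (hf2 _)
    have hs : ∀ i, ∃ s, i + 1 < r → s ∈ S ∧ pos h M (f (c (i + 1))) = pos h M (f (c i)) +
        (a (prt hh (f (c (i + 1)))) - a (prt hh (f (c i)))) * s := by
      intro i
      by_cases hi : i + 1 < r
      · obtain ⟨-, x, s, hs, e1, e2⟩ := hf1 _ _ (hadj i hi)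
        refine ⟨s, fun _ => ⟨hs, ?_⟩⟩
        rw [e1, e2, add_assoc, ← add_mul, Nat.add_sub_cancel' (hα i hi).le]
      · exact ⟨0, fun h => absurd h hi⟩
    choose s hs using hs
    obtain ⟨-, x, s0, hs0, e1, e2⟩ := hf1 _ _ hadj0
    have := cycle_conv hS r hr (fun i => a (prt hh (f (c i)))) (fun i => pos h M (f (c i))) hα
      (haA _) s s0 (fun i hi => (hs i hi).1) hs0 (fun i hi => (hs i hi).2) (by
        simp only [e1, e2]; push_cast; ring)
    refine ⟨s 0, hα 0 (by omega), (hs 0 (by omega)).2, ?_⟩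
    rw [this]
    exact (hs 1 (by omega)).2
  have hc02 : c 0 ≠ c 2 := fun h => by have := hc 0 (by omega) 2 (by omega) h; omega
  have hc12 : c 1 ≠ c 2 := fun h => by have := hc 1 (by omega) 2 (by omega) h; omega
  refine step2.trans ?_
  let Ψ : (V → Fin n) → ({v : V // v ≠ c 2} → Fin n) × (Fin h × Fin (n / h / M + 1)) := fun f =>
    (fun v => f v, prt hh (f (c 2)), ⟨(f (c 2) : ℕ) / h / M, by
      have : (f (c 2) : ℕ) / h / M ≤ n / h / M :=
        Nat.div_le_div_right (Nat.div_le_div_right (f (c 2)).2.le)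
      omega⟩)
  have hΨ : Set.InjOn Ψ F := by
    intro f hf f' hf' hff
    simp only [Ψ, Prod.mk.injEq, Fin.mk.injEq] at hff
    obtain ⟨h1, h2, h3⟩ := hff
    have hne : ∀ v, v ≠ c 2 → f v = f' v := fun v hv => congrFun h1 ⟨v, hv⟩
    obtain ⟨s, g0, g1, g2⟩ := step3 f hf
    obtain ⟨s', g0', g1', g2'⟩ := step3 f' hf'
    rw [← hne _ hc02, ← hne _ hc12] at g0' g1'
    rw [← hne _ hc12, ← h2] at g2'
    have hss : s = s' := by
      apply Nat.eq_of_mul_eq_mul_left (Nat.sub_pos_of_lt g0)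
      omega
    have hp : pos h M (f (c 2)) = pos h M (f' (c 2)) := by rw [g2, g2', hss]
    have hlast : f (c 2) = f' (c 2) := by
      have e1 : (f (c 2) : ℕ) / h = (f' (c 2) : ℕ) / h := by
        rw [← Nat.mod_add_div ((f (c 2) : ℕ) / h) M, ← Nat.mod_add_div ((f' (c 2) : ℕ) / h) M, h3]
        unfold pos at hp
        rw [hp]
      have e2 : (f (c 2) : ℕ) % h = (f' (c 2) : ℕ) % h := congrArg Fin.val h2
      apply Fin.ext
      rw [← Nat.mod_add_div (f (c 2) : ℕ) h, ← Nat.mod_add_div (f' (c 2) : ℕ) h, e1, e2]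
    funext v
    by_cases hv : v = c 2
    · rw [hv, hlast]
    · exact hne v hv
  have := Set.ncard_le_ncard_of_injOn Ψ (t := Set.univ) (fun _ _ => Set.mem_univ _) hΨ (Set.toFinite _)
  refine this.trans (le_of_eq ?_)
  rw [Set.ncard_univ, Nat.card_eq_fintype_card, Fintype.card_prod, Fintype.card_prod,
    Fintype.card_fun, Fintype.card_fin, Fintype.card_fin, Fintype.card_fin]
  congr 2
  rw [Fintype.card_subtype_compl, Fintype.card_subtype_eq]

/-- Theorem 3.6 of the paper. For every `h ≥ 3` there are `ε₀, c > 0` such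
that for every `ε ∈ (0, ε₀)` and every non-bipartite graph `H` on `h` vertices with core
`K = H[X]` on `k = |X|` vertices, for all sufficiently large `n` there is an `n`-vertex graph
`G` that is homomorphic to `K`, is `ε`-far from being induced `H`-free, and contains at most
`ε ^ (c log(1/ε)) n ^ k` (not necessarily induced) copies of `K`. -/
theorem hard_construction_via_core (h : ℕ) (hh : 3 ≤ h) :
    ∃ ε₀ c : ℝ, 0 < ε₀ ∧ 0 < c ∧
      ∀ ε : ℝ, 0 < ε → ε < ε₀ →
      ∀ H : SimpleGraph (Fin h), ¬ IsBipGraph H →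
      ∀ X : Set (Fin h), IsCoreOf H X →
        ∃ n₀ : ℕ, ∀ n : ℕ, n₀ ≤ n → ∃ G : SimpleGraph (Fin n),
          Nonempty (G →g H.induce X) ∧
          Far (InducedFree {⟨h, H⟩}) G ε ∧
          (Set.ncard {K : G.Subgraph | Nonempty (H.induce X ≃g K.coe)} : ℝ)
            ≤ ε ^ (c * Real.log (1 / ε)) * (n : ℝ) ^ X.ncard := by
  have hh0 : 0 < h := by omega
  set A := h * h with hA
  have hA2 : 2 ≤ A := by rw [hA]; nlinarith
  set C : ℝ := 4 * (h : ℝ) ^ 2 * (1 + A) ^ 4 with hC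
  have hC1 : 1 ≤ C := by
    have h1 : (1 : ℝ) ≤ h := by exact_mod_cast hh0
    have h2 : (1 : ℝ) ≤ (h : ℝ) ^ 2 := one_le_pow₀ h1
    have h3 : (1 : ℝ) ≤ (1 + A : ℝ) ^ 4 := one_le_pow₀ (by
      have : (0 : ℝ) ≤ A := by positivity
      linarith)
    rw [hC]; nlinarith
  obtain ⟨ε₀, c, hε₀, hc0, hpar⟩ := params A hA2 C hC1
  refine ⟨ε₀, c, hε₀, hc0, ?_⟩
  intro ε hε hεlt H hH X hX
  obtain ⟨m, S, hm, hSm, hSconv, hScard, hmε⟩ := hpar ε hε hεlt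
  obtain ⟨⟨φ⟩, hXmin⟩ := hX
  have hcore : ∀ σ : H.induce X →g H.induce X, Function.Surjective σ := by
    intro σ
    let Y : Set (Fin h) := Set.range fun x : X => (σ x : Fin h)
    have hYX : Y ⊆ X := by
      rintro _ ⟨x, rfl⟩
      exact (σ x).2
    have hhom : Nonempty (H →g H.induce Y) :=
      ⟨⟨fun u => ⟨(σ (φ u) : Fin h), ⟨φ u, rfl⟩⟩, fun {u v} huv => σ.map_adj (φ.map_adj huv)⟩⟩
    have hYeq := Set.eq_of_subset_of_ncard_le hYX (hXmin Y hhom) (Set.toFinite _)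
    intro x
    have hx : (x : Fin h) ∈ Y := by rw [hYeq]; exact x.2
    obtain ⟨y, hy⟩ := hx
    exact ⟨y, Subtype.ext hy⟩
  have hbip : ¬ (H.induce X).IsBipartite := by
    rintro ⟨col⟩
    apply hH
    refine ⟨{u | col (φ u) = 0}, ?_, ?_⟩
    · intro u hu v hv huv
      have := col.valid (φ.map_adj huv)
      simp only [Set.mem_ofPred_eq] at hu hv
      exact this (hu.trans hv.symm)
    · intro u hu v hv huv
      have := col.valid (φ.map_adj huv)
      simp only [Set.mem_ofPred_eq] at hu hv
      omega
  obtain ⟨r, cy, hr, hcinj, hcadj, hcadj0⟩ := exists_cycle_fun _ hbip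
  have hrh : r ≤ h := by
    have h1 : Function.Injective (fun i : Fin r => (cy i : Fin h)) := by
      intro i j hij
      exact Fin.ext (hcinj i i.2 j j.2 (Subtype.ext hij))
    simpa using Fintype.card_le_of_injective _ h1
  obtain ⟨ord, hordlt, hordc⟩ : ∃ ord : X → ℕ, (∀ x, ord x < r) ∧ ∀ i < r, ord (cy i) = i := by
    refine ⟨fun x => if hx : ∃ i < r, cy i = x then hx.choose else 0, ?_, ?_⟩
    · intro x
      by_cases hx : ∃ i < r, cy i = x
      · simp only [dif_pos hx]; exact hx.choose_spec.1
      · simp only [dif_neg hx]; omega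
    · intro i hi
      have hx : ∃ j < r, cy j = cy i := ⟨i, hi, rfl⟩
      simp only [dif_pos hx]
      exact hcinj _ hx.choose_spec.1 _ hi hx.choose_spec.2
  let a : Fin h → ℕ := fun u => h * ord (φ u) + u
  have hainj : Function.Injective a := by
    intro u v huv
    have h1 := congrArg (· % h) huv
    simp only [a, Nat.mul_add_mod, Nat.mod_eq_of_lt u.2, Nat.mod_eq_of_lt v.2] at h1
    exact Fin.ext h1
  have haA : ∀ u, a u ≤ A := by
    intro u
    have h1 := hordlt (φ u)
    have h2 : ord (φ u) + 1 ≤ h := by omega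
    have h3 := u.2
    simp only [a, hA]
    nlinarith
  set M := (1 + A) * m with hM
  have hMpos : 0 < M := by positivity
  refine ⟨h * ((1 + A) * M), ?_⟩
  intro n hn
  set N := h * ((1 + A) * M) with hN
  have hNpos : 0 < N := by positivity
  set b := n / N with hb
  have hb1 : 1 ≤ b := (Nat.one_le_div_iff hNpos).2 hn
  have hbn : N * b ≤ n := Nat.mul_div_le n N
  have hnb : n < N * (b + 1) := Nat.lt_mul_div_succ n hNpos
  have hnpos : 0 < n := by omega
  refine ⟨gph hh0 H a S M n, ⟨φ.comp ⟨prt hh0, fun {u v} huv => huv.1⟩⟩, ?_, ?_⟩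
  · intro G' hG'
    have hemp : IsEmpty (H ↪g G') := hG' ⟨h, H⟩ rfl
    have h1 := far_count hh0 H a hainj A haA S m M n b hm hSm hM
      (by rw [← mul_assoc (1 + A), ← mul_assoc]; exact hbn) G' hemp
    have h1' : (m : ℝ) * #S * b ^ 2 ≤ editDist (gph hh0 H a S M n) G' := by exact_mod_cast h1
    refine le_trans ?_ h1'
    have h2 : n ≤ 2 * (N * b) := by nlinarith
    have h2' : (n : ℝ) ≤ 2 * (h * ((1 + A) * ((1 + A) * m)) * b) := by
      rw [hN, hM] at h2
      exact_mod_cast h2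
    calc ε * (n : ℝ) ^ 2 ≤ ε * (2 * (h * ((1 + A) * ((1 + A) * m)) * b)) ^ 2 := by gcongr
      _ = (m : ℝ) * (C * ε * m) * b ^ 2 := by rw [hC]; ring
      _ ≤ _ := by gcongr
  · have h1 := copies_count hh0 H (H.induce X) φ hcore a A haA S hSconv M n r cy hr hcinj hcadj
      hcadj0 (by
        intro u v i hi hu hv
        simp only [a, hu, hv]
        rw [hordc i (by omega), hordc (i + 1) hi]
        have := u.2
        nlinarith)
    have hcard : Fintype.card X = X.ncard := by
      rw [← Nat.card_eq_fintype_card, Nat.card_coe_set_eq]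
    have hkpos : 0 < Fintype.card X := Fintype.card_pos_iff.2 ⟨cy 0⟩
    rw [hcard] at h1 hkpos
    have h2 : (Set.ncard {K : (gph hh0 H a S M n).Subgraph | Nonempty (H.induce X ≃g K.coe)} : ℝ)
        ≤ (n : ℝ) ^ (X.ncard - 1) * (h * ((n / h / M : ℕ) + 1)) := by exact_mod_cast h1
    refine h2.trans ?_
    have h3 : (h : ℝ) * ((n / h / M : ℕ) + 1) ≤ 2 / m * n := by
      rw [Nat.div_div_eq_div_mul]
      have e1 : h * M * (n / (h * M)) ≤ n := Nat.mul_div_le _ _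
      have e2 : h * M ≤ n := le_trans (by rw [hN]; gcongr; nlinarith) hn
      have e3 : h * M * (n / (h * M) + 1) ≤ 2 * n := by linarith
      have e4 : h * m * (n / (h * M) + 1) ≤ 2 * n := le_trans (by gcongr; rw [hM]; nlinarith) e3
      rw [div_mul_eq_mul_div, le_div_iff₀ (by positivity)]
      calc (h : ℝ) * ((n / (h * M) : ℕ) + 1) * m = ((h * m * (n / (h * M) + 1) : ℕ) : ℝ) := by
            push_cast; ring
        _ ≤ ((2 * n : ℕ) : ℝ) := by exact_mod_cast e4
        _ = 2 * n := by push_cast; ring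
    calc (n : ℝ) ^ (X.ncard - 1) * (h * ((n / h / M : ℕ) + 1))
        ≤ (n : ℝ) ^ (X.ncard - 1) * (2 / m * n) := by gcongr
      _ = 2 / m * ((n : ℝ) ^ (X.ncard - 1) * n) := by ring
      _ = 2 / m * (n : ℝ) ^ X.ncard := by rw [← pow_succ, Nat.sub_add_cancel hkpos]
      _ ≤ _ := by gcongr

end
end
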